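/- arXiv:0906.3657 — 3 statements merged into one kernel-verified Lean document; each statement's English description precedes it below -/
import Mathlib

section
/- Let b>0, d∈ℕ and let (G_n)_{n≥0} be a (b,d)-expander. There is a constant C(b,d)<∞, depending only on b and d, such that for every n and every p∈(0,1): Var_p(L_n^{(1)}) ≤ C(b,d) · (|V_n|/log|V_n|) · (d/dp) E_p(L_n^{(1)}), where (d/dp) E_p(L_n^{(1)}) is the derivative at p of the map q ↦ E_{n,q}(L_n^{(1)}). -/
open Filter

noncomputable section

/-- The spanning subgraph of `G` determined by the configuration `x : {0,1}^E`:
an edge of `G` is retained iff its coordinate equals `true`. -/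
def percoGraph {V : Type*} (G : SimpleGraph V) (x : G.edgeSet → Bool) : SimpleGraph V :=
  SimpleGraph.fromEdgeSet {e : Sym2 V | ∃ h : e ∈ G.edgeSet, x ⟨e, h⟩ = true}

/-- The vertex set of the connected component of `v` in the configuration `x`. -/
def percoComp {V : Type*} (G : SimpleGraph V) (x : G.edgeSet → Bool) (v : V) : Set V :=
  {u | (percoGraph G x).Reachable v u}

/-- The number of vertices of the connected component of `v` in the configuration `x`. -/
def compSize {V : Type*} (G : SimpleGraph V) (x : G.edgeSet → Bool) (v : V) : ℕ :=
  (percoComp G x v).ncard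

/-- `L⁽¹⁾`: the number of vertices of the largest connected component of the configuration. -/
def largestComp {V : Type*} (G : SimpleGraph V) (x : G.edgeSet → Bool) : ℕ :=
  sSup (Set.range (compSize G x))

/-- The probability of a single configuration under the product Bernoulli(p) measure. -/
def configProb {E : Type*} (p : ℝ) (x : E → Bool) : ℝ :=
  ∏ᶠ e : E, if x e then p else 1 - p

/-- The product Bernoulli(p) probability of a set of configurations. -/
def probC {E : Type*} (p : ℝ) (A : Set (E → Bool)) : ℝ :=
  ∑ᶠ x ∈ A, configProb p x

/-- Expectation under the product Bernoulli(p) measure. -/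
def expC {E : Type*} (p : ℝ) (f : (E → Bool) → ℝ) : ℝ :=
  ∑ᶠ x : E → Bool, configProb p x * f x

/-- Variance under the product Bernoulli(p) measure. -/
def varC {E : Type*} (p : ℝ) (f : (E → Bool) → ℝ) : ℝ :=
  expC p (fun x => f x ^ 2) - (expC p f) ^ 2

open Classical in
/-- The configuration `x` with coordinate `e` set to `b`. -/
def setEdge {E : Type*} (x : E → Bool) (e : E) (b : Bool) : E → Bool :=
  fun e' => if e' = e then b else x e'

/-- The operator `Δ_{e,p} f (x) = f(x) - ∫ f(x) dx(e)`. -/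
def deltaE {E : Type*} (p : ℝ) (f : (E → Bool) → ℝ) (e : E) (x : E → Bool) : ℝ :=
  f x - (p * f (setEdge x e true) + (1 - p) * f (setEdge x e false))

/-- The norm `‖g‖_{1,p}`. -/
def norm1 {E : Type*} (p : ℝ) (g : (E → Bool) → ℝ) : ℝ :=
  expC p fun x => |g x|

/-- The squared norm `‖g‖_{2,p}²`. -/
def sqNorm2 {E : Type*} (p : ℝ) (g : (E → Bool) → ℝ) : ℝ :=
  expC p fun x => g x ^ 2

/-- `|E(S, Sᶜ)|`: the number of edges of `G` with one endpoint in `S` and the other outside `S`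
(counted via the ordered pair whose first coordinate lies in `S`). -/
def edgeBoundaryCard {V : Type*} (G : SimpleGraph V) (S : Set V) : ℕ :=
  {q : V × V | G.Adj q.1 q.2 ∧ q.1 ∈ S ∧ q.2 ∉ S}.ncard

/-- The maximal degree of `G` is at most `d`. -/
def DegreeLE {V : Type*} (G : SimpleGraph V) (d : ℕ) : Prop :=
  ∀ v, {u | G.Adj v u}.ncard ≤ d

/-- The Cheeger (edge-isoperimetric) constant of `G` is strictly greater than `b`. -/
def CheegerGT {V : Type*} (G : SimpleGraph V) (b : ℝ) : Prop :=
  ∀ S : Set V, 0 < S.ncard → 2 * S.ncard ≤ Nat.card V →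
    b * (S.ncard : ℝ) < (edgeBoundaryCard G S : ℝ)

/-- A `(b,d)`-expander: a sequence of finite graphs with `|V_n| → ∞`, maximal degree at most `d`
and Cheeger constant greater than `b`. -/
structure ExpanderSeq (b : ℝ) (d : ℕ) where
  V : ℕ → Type
  finV : ∀ n, Finite (V n)
  G : ∀ n, SimpleGraph (V n)
  card_tendsto : Tendsto (fun n => Nat.card (V n)) atTop atTop
  degree_le : ∀ n, DegreeLE (G n) d
  cheeger_gt : ∀ n, CheegerGT (G n) b


set_option linter.unusedSectionVars false
set_option linter.unusedVariables false

section Generic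

variable {E : Type*} [Fintype E]

/-- weight of a configuration -/
def wt (p : ℝ) (x : E → Bool) : ℝ := ∏ e, if x e then p else 1 - p

/-- finite expectation -/
def Ex (p : ℝ) (f : (E → Bool) → ℝ) : ℝ := ∑ᶠ x, wt p x * f x

lemma Ex_def [DecidableEq E] (p : ℝ) (f : (E → Bool) → ℝ) : Ex p f = ∑ x, wt p x * f x := by
  unfold Ex
  rw [finsum_eq_sum_of_fintype]

lemma expC_eq (p : ℝ) (f : (E → Bool) → ℝ) : expC p f = Ex p f := by
  unfold expC Ex configProb wt
  simp only [finprod_eq_prod_of_fintype]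

/-- discrete derivative -/
def grd (f : (E → Bool) → ℝ) (e : E) (x : E → Bool) : ℝ :=
  f (setEdge x e true) - f (setEdge x e false)

@[simp] lemma setEdge_same (x : E → Bool) (e : E) (b : Bool) : setEdge x e b e = b := by
  simp [setEdge]

lemma setEdge_ne (x : E → Bool) {e e' : E} (b : Bool) (h : e' ≠ e) :
    setEdge x e b e' = x e' := by
  simp [setEdge, h]

@[simp] lemma setEdge_setEdge (x : E → Bool) (e : E) (b c : Bool) :
    setEdge (setEdge x e b) e c = setEdge x e c := by
  funext e'
  by_cases h : e' = e
  · subst h; simp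
  · simp [setEdge_ne, h]

lemma setEdge_comm (x : E → Bool) {e e' : E} (h : e ≠ e') (b c : Bool) :
    setEdge (setEdge x e b) e' c = setEdge (setEdge x e' c) e b := by
  funext a
  by_cases h1 : a = e
  · subst h1; simp [setEdge_ne, h]
  · by_cases h2 : a = e'
    · subst h2; simp [setEdge_ne, h1]
    · simp [setEdge_ne, h1, h2]

lemma setEdge_self (x : E → Bool) (e : E) : setEdge x e (x e) = x := by
  funext a
  by_cases h1 : a = e
  · subst h1; simp
  · simp [setEdge_ne, h1]

variable [DecidableEq E]

/-- the weight off an edge -/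
def wo (p : ℝ) (e : E) (x : E → Bool) : ℝ := ∏ a ∈ Finset.univ.erase e, if x a then p else 1 - p

lemma wt_eq (p : ℝ) (e : E) (x : E → Bool) :
    wt p x = (if x e then p else 1 - p) * wo p e x := by
  unfold wt wo
  rw [Finset.mul_prod_erase Finset.univ (fun e => if x e then p else 1 - p) (Finset.mem_univ e)]

lemma wo_set (p : ℝ) (e : E) (x : E → Bool) (b : Bool) : wo p e (setEdge x e b) = wo p e x := by
  unfold wo
  apply Finset.prod_congr rfl
  intro a ha
  rw [setEdge_ne _ _ (Finset.ne_of_mem_erase ha)]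

lemma wt_nonneg {p : ℝ} (h0 : 0 ≤ p) (h1 : p ≤ 1) (x : E → Bool) : 0 ≤ wt p x := by
  unfold wt
  apply Finset.prod_nonneg
  intro a _
  split_ifs <;> linarith

lemma sum_prod_all (g : E → Bool → ℝ) :
    ∑ x : E → Bool, ∏ e, g e (x e) = ∏ e, (g e true + g e false) := by
  have := Finset.prod_univ_sum (fun _ : E => (Finset.univ : Finset Bool)) g
  simp only [Fintype.univ_bool, Finset.sum_pair (show true ≠ false by simp)] at this
  rw [this]
  congr 1

lemma sum_wt (p : ℝ) : ∑ x : E → Bool, wt p x = 1 := by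
  unfold wt
  rw [sum_prod_all (fun _ b => if b then p else 1 - p)]
  simp

lemma two_sum (e : E) (F : (E → Bool) → ℝ) :
    2 * ∑ x, F x = ∑ x, (F (setEdge x e true) + F (setEdge x e false)) := by
  have hflip : ∑ x, F (setEdge x e (!(x e))) = ∑ x, F x := by
    apply Finset.sum_bij' (fun x _ => setEdge x e (!(x e))) (fun x _ => setEdge x e (!(x e)))
    all_goals simp [setEdge_self]
  rw [two_mul]
  nth_rewrite 2 [← hflip]
  rw [← Finset.sum_add_distrib]
  apply Finset.sum_congr rfl
  intro x _
  have h := setEdge_self x e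
  cases hx : x e
  · rw [hx] at h; simp [h, add_comm]
  · rw [hx] at h; simp [h]

lemma two_Ex (p : ℝ) (e : E) (f : (E → Bool) → ℝ) :
    2 * Ex p f = ∑ x, wo p e x * (p * f (setEdge x e true) + (1 - p) * f (setEdge x e false)) := by
  rw [Ex_def, two_sum e]
  apply Finset.sum_congr rfl
  intro x _
  rw [wt_eq p e, wt_eq p e, wo_set, wo_set]
  simp
  ring

/-- average over an edge -/
def avg (p : ℝ) (e : E) (f : (E → Bool) → ℝ) (x : E → Bool) : ℝ :=
  p * f (setEdge x e true) + (1 - p) * f (setEdge x e false)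

lemma Ex_avg (p : ℝ) (e : E) (f : (E → Bool) → ℝ) : Ex p (avg p e f) = Ex p f := by
  have : 2 * Ex p (avg p e f) = 2 * Ex p f := by
    rw [two_Ex p e, two_Ex p e]
    apply Finset.sum_congr rfl
    intro x _
    simp [avg]
    left; ring
  linarith

lemma Ex_mono {p : ℝ} (h0 : 0 ≤ p) (h1 : p ≤ 1) {f g : (E → Bool) → ℝ} (h : ∀ x, f x ≤ g x) :
    Ex p f ≤ Ex p g := by
  rw [Ex_def, Ex_def]
  exact Finset.sum_le_sum fun x _ => mul_le_mul_of_nonneg_left (h x) (wt_nonneg h0 h1 x)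

lemma Ex_nonneg {p : ℝ} (h0 : 0 ≤ p) (h1 : p ≤ 1) {f : (E → Bool) → ℝ} (h : ∀ x, 0 ≤ f x) :
    0 ≤ Ex p f := by
  rw [Ex_def]
  exact Finset.sum_nonneg fun x _ => mul_nonneg (wt_nonneg h0 h1 x) (h x)

lemma Ex_add (p : ℝ) (f g : (E → Bool) → ℝ) :
    Ex p (fun x => f x + g x) = Ex p f + Ex p g := by
  simp only [Ex_def, mul_add, Finset.sum_add_distrib]

lemma Ex_sub (p : ℝ) (f g : (E → Bool) → ℝ) :
    Ex p (fun x => f x - g x) = Ex p f - Ex p g := by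
  simp only [Ex_def, mul_sub, Finset.sum_sub_distrib]

lemma Ex_mul (p c : ℝ) (f : (E → Bool) → ℝ) :
    Ex p (fun x => c * f x) = c * Ex p f := by
  simp only [Ex_def, Finset.mul_sum]
  apply Finset.sum_congr rfl
  intro x _
  ring

lemma Ex_const (p c : ℝ) : Ex p (fun _ : E → Bool => c) = c := by
  rw [Ex_def, ← Finset.sum_mul, sum_wt, one_mul]

lemma Ex_sum {ι : Type*} (p : ℝ) (s : Finset ι) (f : ι → (E → Bool) → ℝ) :
    Ex p (fun x => ∑ i ∈ s, f i x) = ∑ i ∈ s, Ex p (f i) := by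
  simp only [Ex_def, Finset.mul_sum]
  rw [Finset.sum_comm]

lemma Ex_sq_avg (p : ℝ) (e : E) (f : (E → Bool) → ℝ) :
    Ex p (fun x => f x ^ 2) =
      Ex p (fun x => avg p e f x ^ 2) + p * (1 - p) * Ex p (fun x => grd f e x ^ 2) := by
  rw [← Ex_mul, ← Ex_add, ← Ex_avg p e (fun x => f x ^ 2)]
  congr 1
  funext x
  simp only [avg, grd]
  ring

lemma Ex_grd_avg {p : ℝ} (h0 : 0 ≤ p) (h1 : p ≤ 1) (e e' : E) (f : (E → Bool) → ℝ) :
    Ex p (fun x => grd (avg p e f) e' x ^ 2) ≤ Ex p (fun x => grd f e' x ^ 2) := by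
  by_cases h : e = e'
  · subst h
    apply Ex_mono h0 h1
    intro x
    simp [grd, avg]
    positivity
  · have : (fun x => grd (avg p e f) e' x ^ 2) = (fun x => avg p e (grd f e') x ^ 2) := by
      funext x
      simp only [grd, avg]
      rw [setEdge_comm x h, setEdge_comm x h, setEdge_comm x h, setEdge_comm x h]
      ring
    rw [this, Ex_sq_avg p e (grd f e')]
    have : 0 ≤ p * (1 - p) * Ex p (fun x => grd (grd f e') e x ^ 2) := by
      apply mul_nonneg (mul_nonneg h0 (by linarith))
      exact Ex_nonneg h0 h1 fun x => sq_nonneg _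
    linarith

/-- iterated averages -/
def avgL (p : ℝ) : List E → ((E → Bool) → ℝ) → ((E → Bool) → ℝ)
  | [], f => f
  | e :: l, f => avgL p l (avg p e f)

lemma Ex_avgL (p : ℝ) (l : List E) : ∀ f, Ex p (avgL p l f) = Ex p f := by
  induction l with
  | nil => intro f; rfl
  | cons e l ih => intro f; simp only [avgL]; rw [ih, Ex_avg]

lemma avgL_ineq {p : ℝ} (h0 : 0 ≤ p) (h1 : p ≤ 1) (l : List E) : ∀ f : (E → Bool) → ℝ,
    Ex p (fun x => f x ^ 2) ≤ Ex p (fun x => avgL p l f x ^ 2) +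
      p * (1 - p) * (l.map fun e => Ex p (fun x => grd f e x ^ 2)).sum := by
  induction l with
  | nil => intro f; simp [avgL]
  | cons e l ih =>
    intro f
    rw [Ex_sq_avg p e f]
    have h := ih (avg p e f)
    simp only [avgL, List.map_cons, List.sum_cons]
    have h2 : (l.map fun e' => Ex p (fun x => grd (avg p e f) e' x ^ 2)).sum ≤
      (l.map fun e' => Ex p (fun x => grd f e' x ^ 2)).sum := by
      apply List.sum_le_sum
      intro i _
      exact Ex_grd_avg h0 h1 e i f
    have h3 : 0 ≤ p * (1 - p) := mul_nonneg h0 (by linarith)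
    have := mul_le_mul_of_nonneg_left h2 h3
    linarith

lemma avgL_indep (p : ℝ) (l : List E) : ∀ (f : (E → Bool) → ℝ) (e : E),
    (e ∈ l ∨ ∀ x b, f (setEdge x e b) = f x) → ∀ x b, avgL p l f (setEdge x e b) = avgL p l f x := by
  induction l with
  | nil => intro f e h; simpa [avgL] using h
  | cons a l ih =>
    intro f e h
    simp only [avgL]
    apply ih
    by_cases hl : e ∈ l
    · exact Or.inl hl
    · right
      intro x b
      by_cases hea : e = a
      · subst hea; simp [avg]
      · have hf : ∀ x b, f (setEdge x e b) = f x := by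
          rcases h with h | h
          · simp [hea, hl] at h
          · exact h
        simp only [avg]
        rw [setEdge_comm x hea, setEdge_comm x hea, hf, hf]

lemma const_of_indep (f : (E → Bool) → ℝ) (h : ∀ e x b, f (setEdge x e b) = f x) (x y : E → Bool) :
    f x = f y := by
  classical
  have : ∀ s : Finset E, ∀ x, (∀ e, e ∉ s → x e = y e) → f x = f y := by
    intro s
    induction s using Finset.induction_on with
    | empty => intro x hx; congr 1; funext e; exact hx e (by simp)
    | insert a s ha ih =>
      intro x hx
      rw [← h a x (y a)]
      apply ih
      intro e he
      by_cases hea : e = a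
      · subst hea; simp
      · rw [setEdge_ne _ _ hea]; exact hx e (by simp [hea, he])
  exact this Finset.univ x (by simp)

lemma poincare {p : ℝ} (h0 : 0 ≤ p) (h1 : p ≤ 1) (f : (E → Bool) → ℝ) :
    varC p f ≤ p * (1 - p) * ∑ e, Ex p (fun x => grd f e x ^ 2) := by
  unfold varC
  rw [expC_eq, expC_eq]
  have h := avgL_ineq h0 h1 (Finset.univ : Finset E).toList f
  rw [Finset.sum_map_toList] at h
  set g := avgL p (Finset.univ : Finset E).toList f with hg
  have hc : ∀ x, g x = g (fun _ => true) := by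
    intro x
    apply const_of_indep
    intro e
    apply avgL_indep
    left; simp
  have e1 : Ex p f = g (fun _ => true) := by
    rw [← Ex_avgL p (Finset.univ : Finset E).toList f, ← hg, ← Ex_const (E := E) p (g (fun _ => true))]
    congr 1; funext x; exact hc x
  have e2 : Ex p (fun x => g x ^ 2) = g (fun _ => true) ^ 2 := by
    rw [← Ex_const (E := E) p (g (fun _ => true) ^ 2)]
    congr 1; funext x; rw [hc x]
  rw [e2] at h
  rw [e1]
  linarith

lemma russo (p : ℝ) (f : (E → Bool) → ℝ) :
    deriv (fun q => expC q f) p = ∑ e, Ex p (grd f e) := by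
  have hd : HasDerivAt (fun q => ∑ x, wt q x * f x)
      (∑ x : E → Bool, (∑ e, wo p e x * (if x e then 1 else -1)) * f x) p := by
    apply HasDerivAt.fun_sum
    intro x _
    apply HasDerivAt.mul_const
    have := HasDerivAt.fun_finsetProd (u := (Finset.univ : Finset E))
      (f := fun e q => if x e then q else 1 - q) (f' := fun e => if x e then (1:ℝ) else -1) (x := p) (by
        intro e _
        cases x e
        · simpa using (hasDerivAt_id p).const_sub 1
        · simpa using (hasDerivAt_id' p))
    simpa [wt, wo, smul_eq_mul] using this
  have : (fun q => expC q f) = (fun q => ∑ x, wt q x * f x) := by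
    funext q; rw [expC_eq, Ex_def]
  rw [this, hd.deriv]
  simp only [Finset.sum_mul]
  rw [Finset.sum_comm]
  apply Finset.sum_congr rfl
  intro e _
  have h1 := two_Ex p e (grd f e)
  have h2 := two_sum e (fun x => wo p e x * (if x e then 1 else -1) * f x)
  have : 2 * ∑ x, wo p e x * (if x e then 1 else -1) * f x = 2 * Ex p (grd f e) := by
    rw [h1, h2]
    apply Finset.sum_congr rfl
    intro x _
    simp [wo_set, grd]
    ring
  linarith

/-- Functions not depending on e. -/
lemma Ex_closed (p : ℝ) (e : E) (f : (E → Bool) → ℝ) (hf : ∀ x b, f (setEdge x e b) = f x) :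
    Ex p (fun x => if x e then 0 else f x) = (1 - p) * Ex p f := by
  rw [← Ex_avg p e, ← Ex_mul]
  congr 1
  funext x
  simp [avg, hf]

lemma Ex_open_le {p : ℝ} (h0 : 0 < p) (h1 : p ≤ 1) (e : E) (f : (E → Bool) → ℝ) (hf : ∀ x, 0 ≤ f x) :
    Ex p (fun x => f (setEdge x e true)) ≤ (1 / p) * Ex p f := by
  rw [← Ex_avg p e f, ← Ex_mul]
  apply Ex_mono h0.le h1
  intro x
  simp only [avg]
  rw [mul_add, ← mul_assoc, one_div, inv_mul_cancel₀ h0.ne', one_mul]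
  have : 0 ≤ p⁻¹ * ((1 - p) * f (setEdge x e false)) :=
    mul_nonneg (by positivity) (mul_nonneg (by linarith) (hf _))
  linarith

/-- product expectations -/
lemma Ex_prod (p : ℝ) (g : E → Bool → ℝ) :
    Ex p (fun x => ∏ e, g e (x e)) = ∏ e, (p * g e true + (1 - p) * g e false) := by
  rw [Ex_def]
  have := sum_prod_all (fun (e : E) b => (if b then p else 1 - p) * g e b)
  simp only [Finset.prod_mul_distrib] at this
  unfold wt
  rw [this]
  simp

/-- splice two configurations along T -/
def splice (T : Finset E) (x y : E → Bool) : E → Bool := fun e => if e ∈ T then x e else y e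

/-- Tilting along a stopping set. -/
lemma tilt (p : ℝ) (T : (E → Bool) → Finset E)
    (hT : ∀ x y, (∀ e ∈ T x, y e = x e) → T y = T x) (g : Bool → ℝ)
    (hg : p * g true + (1 - p) * g false = 1) :
    Ex p (fun x => ∏ e ∈ T x, g (x e)) = 1 := by
  set c : Bool → ℝ := fun b => if b then p else 1 - p with hc
  set c' : Bool → ℝ := fun b => c b * g b with hc'
  have hcs : c true + c false = 1 := by simp [hc]
  have hcs' : c' true + c' false = 1 := by simp [hc', hc, hg]
  have hsp : ∀ x y, T (splice (T x) x y) = T x := by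
    intro x y
    apply hT
    intro e he
    simp [splice, he]
  have key : ∑ z : (E → Bool) × (E → Bool),
      (∏ e, (if e ∈ T z.1 then c' (z.1 e) else c (z.1 e))) *
      (∏ e, (if e ∈ T z.1 then c (z.2 e) else c' (z.2 e))) =
      ∑ z : (E → Bool) × (E → Bool), (∏ e, c' (z.1 e)) * (∏ e, c (z.2 e)) := by
    apply Finset.sum_bij' (fun z _ => (splice (T z.1) z.1 z.2, splice (T z.1) z.2 z.1))
      (fun z _ => (splice (T z.1) z.1 z.2, splice (T z.1) z.2 z.1))
    · simp
    · simp
    · rintro ⟨x, y⟩ _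
      simp only [hsp]
      ext e <;> simp [splice] <;> split_ifs <;> rfl
    · rintro ⟨x, y⟩ _
      simp only [hsp]
      ext e <;> simp [splice] <;> split_ifs <;> rfl
    · rintro ⟨x, y⟩ _
      simp only
      rw [← Finset.prod_mul_distrib, ← Finset.prod_mul_distrib]
      apply Finset.prod_congr rfl
      intro e _
      simp only [splice]
      split_ifs
      · rfl
      · ring
  rw [Fintype.sum_prod_type, Fintype.sum_prod_type] at key
  simp only [← Finset.mul_sum] at key
  have h1 : ∀ x : E → Bool, ∑ y : E → Bool, ∏ e, (if e ∈ T x then c (y e) else c' (y e)) = 1 := by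
    intro x
    rw [sum_prod_all (fun e b => if e ∈ T x then c b else c' b)]
    apply Finset.prod_eq_one
    intro e _
    split_ifs <;> assumption
  have h2 : ∑ y : E → Bool, ∏ e, c (y e) = 1 := by
    rw [sum_prod_all (fun _ b => c b)]
    simp [hcs]
  have h3 : ∑ y : E → Bool, ∏ e, c' (y e) = 1 := by
    rw [sum_prod_all (fun _ b => c' b)]
    simp [hcs']
  simp only [h1, h2, mul_one, h3] at key
  rw [Ex_def, ← key]
  apply Finset.sum_congr rfl
  intro x _
  have e1 : wt p x = ∏ e, c (x e) := rfl
  have e2 : ∏ e ∈ T x, g (x e) = ∏ e, if e ∈ T x then g (x e) else 1 := by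
    rw [Finset.prod_ite_mem, Finset.univ_inter]
  rw [e1, e2, ← Finset.prod_mul_distrib]
  apply Finset.prod_congr rfl
  intro e _
  split_ifs
  · rfl
  · simp

/-- Markov -/
lemma markov {p : ℝ} (h0 : 0 ≤ p) (h1 : p ≤ 1) (A : (E → Bool) → Prop) [DecidablePred A]
    (f : (E → Bool) → ℝ) (hf : ∀ x, 0 ≤ f x) (c : ℝ) (hc : 0 < c) (h : ∀ x, A x → c ≤ f x) :
    Ex p (fun x => if A x then 1 else 0) ≤ Ex p f / c := by
  rw [le_div_iff₀ hc, mul_comm, ← Ex_mul]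
  apply Ex_mono h0 h1
  intro x
  split_ifs with hA
  · simpa using h x hA
  · simpa using hf x

/-- the walk sum -/
def Ysum (p : ℝ) (T : (E → Bool) → Finset E) (x : E → Bool) : ℝ :=
  ∑ e ∈ T x, ((if x e then 1 else 0) - p)

lemma tail_bound {p : ℝ} (h0 : 0 ≤ p) (h1 : p ≤ 1) (T : (E → Bool) → Finset E)
    (hT : ∀ x y, (∀ e ∈ T x, y e = x e) → T y = T x) (s u : ℝ) (hs : |s| ≤ 1)
    (A : (E → Bool) → Prop) [DecidablePred A] (hA : ∀ x, A x → u ≤ s * Ysum p T x) :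
    Ex p (fun x => if A x then 1 else 0) ≤ Real.exp (s ^ 2 * Fintype.card E - u) := by
  set Z := p * Real.exp (s * (1 - p)) + (1 - p) * Real.exp (s * (0 - p)) with hZ
  have hZpos : 0 < Z := by
    rcases lt_or_ge 0 p with h | h
    · have : 0 ≤ (1 - p) * Real.exp (s * (0 - p)) := mul_nonneg (by linarith) (Real.exp_pos _).le
      have := mul_pos h (Real.exp_pos (s * (1 - p)))
      linarith
    · have hp : p = 0 := le_antisymm h h0
      rw [hZ, hp]; simp
  have bd : ∀ v : ℝ, |v| ≤ 1 → Real.exp (s * v) ≤ 1 + s * v + s ^ 2 := by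
    intro v hv
    have hsv : |s * v| ≤ 1 := by
      rw [abs_mul]; exact mul_le_one₀ hs (abs_nonneg _) hv
    have := Real.abs_exp_sub_one_sub_id_le hsv
    have h2 := (abs_le.1 this).2
    have h3 : (s * v) ^ 2 ≤ s ^ 2 := by
      rw [mul_pow]
      have : v ^ 2 ≤ 1 := by rw [← sq_abs]; exact pow_le_one₀ (abs_nonneg _) hv
      nlinarith [sq_nonneg s]
    linarith
  have hZle : Z ≤ Real.exp (s ^ 2) := by
    have b1 := bd (1 - p) (by rw [abs_le]; constructor <;> linarith)
    have b2 := bd (0 - p) (by rw [abs_le]; constructor <;> linarith)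
    have := Real.add_one_le_exp (s ^ 2)
    have c1 := mul_le_mul_of_nonneg_left b1 h0
    have c2 := mul_le_mul_of_nonneg_left b2 (show 0 ≤ 1 - p by linarith)
    have : Z ≤ 1 + s ^ 2 := by rw [hZ]; nlinarith
    linarith
  have ht := tilt p T hT (fun b => Real.exp (s * ((if b then 1 else 0) - p)) / Z) (by
    have e : p * (Real.exp (s * (1 - p)) / Z) + (1 - p) * (Real.exp (s * (0 - p)) / Z) = 1 := by
      field_simp
      exact hZ.symm
    simpa using e)
  have hprod : ∀ x, ∏ e ∈ T x, (Real.exp (s * ((if x e then 1 else 0) - p)) / Z) =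
      Real.exp (s * Ysum p T x) / Z ^ (T x).card := by
    intro x
    rw [Finset.prod_div_distrib, Finset.prod_const, ← Real.exp_sum, Ysum, Finset.mul_sum]
  have hm := markov h0 h1 A (fun x => Real.exp (s * Ysum p T x) / Z ^ (T x).card)
    (fun x => by positivity) (Real.exp (u - s ^ 2 * Fintype.card E)) (Real.exp_pos _) (by
      intro x hx
      rw [le_div_iff₀ (by positivity)]
      have : Z ^ (T x).card ≤ Real.exp (s ^ 2 * Fintype.card E) := by
        calc Z ^ (T x).card ≤ Real.exp (s ^ 2) ^ (T x).card := by gcongr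
          _ ≤ Real.exp (s ^ 2) ^ (Fintype.card E) := by
            apply pow_le_pow_right₀
            · exact Real.one_le_exp (sq_nonneg s)
            · exact Finset.card_le_univ _
          _ = _ := by rw [← Real.exp_nat_mul, mul_comm]
      calc _ ≤ Real.exp (u - s ^ 2 * Fintype.card E) * Real.exp (s ^ 2 * Fintype.card E) := by gcongr
        _ = Real.exp u := by rw [← Real.exp_add]; congr 1; ring
        _ ≤ _ := Real.exp_le_exp.2 (hA x hx))
  refine hm.trans ?_
  have : Ex p (fun x => Real.exp (s * Ysum p T x) / Z ^ (T x).card) = 1 := by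
    rw [← ht]; congr 1; funext x; exact (hprod x).symm
  rw [this, one_div, ← Real.exp_neg, neg_sub]

end Generic

section Graph

open Classical

variable {V : Type*} [Fintype V] (G : SimpleGraph V)

lemma perco_adj (x : G.edgeSet → Bool) (u v : V) :
    (percoGraph G x).Adj u v ↔ ∃ h : G.Adj u v, x ⟨s(u, v), h⟩ = true := by
  unfold percoGraph
  rw [SimpleGraph.fromEdgeSet_adj]
  constructor
  · rintro ⟨⟨h, hx⟩, _⟩
    exact ⟨h, hx⟩
  · rintro ⟨h, hx⟩
    exact ⟨⟨h, hx⟩, h.ne⟩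

lemma perco_mono {x y : G.edgeSet → Bool} (h : ∀ e, x e = true → y e = true) :
    percoGraph G x ≤ percoGraph G y := by
  intro u v
  rw [perco_adj, perco_adj]
  rintro ⟨a, b⟩
  exact ⟨a, h _ b⟩

/-- cluster as a finset -/
def cl (x : G.edgeSet → Bool) (v : V) : Finset V :=
  Finset.univ.filter fun u => (percoGraph G x).Reachable v u

lemma mem_cl {x : G.edgeSet → Bool} {v u : V} :
    u ∈ cl G x v ↔ (percoGraph G x).Reachable v u := by simp [cl]

lemma self_mem_cl (x : G.edgeSet → Bool) (v : V) : v ∈ cl G x v := by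
  rw [mem_cl]

lemma cl_eq {x : G.edgeSet → Bool} {u v : V} (h : u ∈ cl G x v) : cl G x u = cl G x v := by
  rw [mem_cl] at h
  ext w
  rw [mem_cl, mem_cl]
  exact ⟨fun k => h.trans k, fun k => h.symm.trans k⟩

lemma cl_disj {x : G.edgeSet → Bool} {u v : V} (h : v ∉ cl G x u) :
    Disjoint (cl G x u) (cl G x v) := by
  rw [Finset.disjoint_left]
  intro a ha hb
  rw [mem_cl] at *
  exact h (ha.trans hb.symm)

lemma compSize_eq (x : G.edgeSet → Bool) (v : V) : compSize G x v = (cl G x v).card := by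
  unfold compSize percoComp cl
  rw [Set.ncard_eq_toFinset_card']
  congr 1
  ext; simp

lemma bdd_range (x : G.edgeSet → Bool) : BddAbove (Set.range (compSize G x)) :=
  (Set.finite_range _).bddAbove

lemma card_cl_le (x : G.edgeSet → Bool) (v : V) : (cl G x v).card ≤ largestComp G x := by
  rw [← compSize_eq]
  exact le_csSup (bdd_range G x) ⟨v, rfl⟩

lemma exists_cl [Nonempty V] (x : G.edgeSet → Bool) : ∃ v, (cl G x v).card = largestComp G x := by
  obtain ⟨v, hv⟩ := Nat.sSup_mem (Set.range_nonempty (compSize G x)) (bdd_range G x)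
  exact ⟨v, by rw [← compSize_eq]; exact hv⟩

lemma L_le (x : G.edgeSet → Bool) (m : ℕ) (h : ∀ v, (cl G x v).card ≤ m) : largestComp G x ≤ m := by
  rcases isEmpty_or_nonempty V with hV | hV
  · unfold largestComp
    rw [Set.range_eq_empty]; simp
  · obtain ⟨v, hv⟩ := exists_cl G x
    rw [← hv]; exact h v

lemma L_le_card (x : G.edgeSet → Bool) : largestComp G x ≤ Fintype.card V :=
  L_le G x _ fun _ => Finset.card_le_univ _

lemma cl_mono {x y : G.edgeSet → Bool} (h : ∀ e, x e = true → y e = true) (v : V) :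
    cl G x v ⊆ cl G y v := by
  intro u
  rw [mem_cl, mem_cl]
  exact fun k => k.mono (perco_mono G h)

lemma L_mono {x y : G.edgeSet → Bool} (h : ∀ e, x e = true → y e = true) :
    largestComp G x ≤ largestComp G y :=
  L_le G x _ fun v => (Finset.card_le_card (cl_mono G h v)).trans (card_cl_le G y v)

lemma le_set_true (x : G.edgeSet → Bool) (e : G.edgeSet) :
    ∀ e', x e' = true → setEdge x e true e' = true := by
  intro e' h
  by_cases k : e' = e
  · subst k; simp
  · rw [setEdge_ne _ _ k]; exact h

lemma set_false_le (x : G.edgeSet → Bool) (e : G.edgeSet) :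
    ∀ e', setEdge x e false e' = true → x e' = true := by
  intro e' h
  by_cases k : e' = e
  · subst k; simp at h
  · rwa [setEdge_ne _ _ k] at h

/-- L as a real function -/
def LR (x : G.edgeSet → Bool) : ℝ := (largestComp G x : ℝ)

lemma grd_ge (x : G.edgeSet → Bool) (e : G.edgeSet) :
    LR G (setEdge x e true) - LR G x ≤ grd (LR G) e x := by
  unfold grd LR
  have := L_mono G (set_false_le G x e)
  have : (largestComp G (setEdge x e false) : ℝ) ≤ largestComp G x := by exact_mod_cast this
  linarith

lemma grd_nonneg (x : G.edgeSet → Bool) (e : G.edgeSet) : 0 ≤ grd (LR G) e x := by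
  refine le_trans ?_ (grd_ge G x e)
  have := L_mono G (le_set_true G x e)
  unfold LR
  have : (largestComp G x : ℝ) ≤ largestComp G (setEdge x e true) := by exact_mod_cast this
  linarith

lemma grd_le (x : G.edgeSet → Bool) (e : G.edgeSet) : grd (LR G) e x ≤ Fintype.card V := by
  unfold grd LR
  have : (largestComp G (setEdge x e true) : ℝ) ≤ Fintype.card V := by
    exact_mod_cast L_le_card G _
  have : (0:ℝ) ≤ largestComp G (setEdge x e false) := by positivity
  linarith

lemma grd_set (x : G.edgeSet → Bool) (e : G.edgeSet) (b : Bool) :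
    grd (LR G) e (setEdge x e b) = grd (LR G) e x := by
  simp [grd]

lemma join (x : G.edgeSet → Bool) (u v : V) (h : G.Adj u v)
    (hL : largestComp G x < largestComp G (setEdge x ⟨s(u, v), h⟩ true)) :
    v ∉ cl G x u ∧
      largestComp G (setEdge x ⟨s(u, v), h⟩ true) ≤ (cl G x u).card + (cl G x v).card := by
  set e : G.edgeSet := ⟨s(u, v), h⟩ with he
  set y := setEdge x e true with hy
  set S := cl G x u ∪ cl G x v with hS
  have hadj : ∀ a c, (percoGraph G y).Adj a c →
      (percoGraph G x).Adj a c ∨ (a = u ∧ c = v) ∨ (a = v ∧ c = u) := by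
    intro a c hac
    rw [perco_adj] at hac
    obtain ⟨k, hk⟩ := hac
    by_cases hee : (⟨s(a, c), k⟩ : G.edgeSet) = e
    · right
      have : s(a, c) = s(u, v) := congrArg Subtype.val hee
      simpa using this
    · left
      rw [perco_adj]
      refine ⟨k, ?_⟩
      rwa [hy, setEdge_ne _ _ hee] at hk
  have hSadj : ∀ a c, (percoGraph G x).Adj a c → a ∈ S → c ∈ S := by
    intro a c hac ha
    rw [hS, Finset.mem_union, mem_cl, mem_cl] at *
    rcases ha with ha | ha
    · left; exact ha.trans hac.reachable
    · right; exact ha.trans hac.reachable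
  have huS : u ∈ S := by simp [hS, self_mem_cl]
  have hvS : v ∈ S := by simp [hS, self_mem_cl]
  have hin : ∀ z ∈ S, ∀ w, (percoGraph G y).Reachable z w → w ∈ S := by
    rintro z hz w ⟨W⟩
    induction W with
    | nil => exact hz
    | cons hac W ih =>
      apply ih
      rcases hadj _ _ hac with k | ⟨rfl, rfl⟩ | ⟨rfl, rfl⟩
      · exact hSadj _ _ k hz
      · exact hvS
      · exact huS
  have hout : ∀ z, z ∉ S → ∀ w, (percoGraph G y).Reachable z w → (percoGraph G x).Reachable z w := by
    rintro z hz w ⟨W⟩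
    induction W with
    | nil => exact SimpleGraph.Reachable.refl _
    | cons hac W ih =>
      rcases hadj _ _ hac with k | ⟨rfl, rfl⟩ | ⟨rfl, rfl⟩
      · refine k.reachable.trans (ih ?_)
        intro hc
        exact hz (hSadj _ _ k.symm hc)
      · exact absurd huS hz
      · exact absurd hvS hz
  have hLS : largestComp G y ≤ max (largestComp G x) S.card := by
    apply L_le
    intro z
    by_cases hz : z ∈ S
    · apply le_max_of_le_right
      apply Finset.card_le_card
      intro w hw
      exact hin z hz w ((mem_cl G).1 hw)
    · apply le_max_of_le_left
      refine le_trans (Finset.card_le_card ?_) (card_cl_le G x z)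
      intro w hw
      rw [mem_cl] at *
      exact hout z hz w hw
  have hLS2 : largestComp G y ≤ S.card := by
    rcases le_max_iff.1 hLS with k | k
    · omega
    · exact k
  refine ⟨?_, hLS2.trans (Finset.card_union_le _ _)⟩
  intro hv
  have : S = cl G x u := by rw [hS, cl_eq G hv, Finset.union_self]
  rw [this] at hLS2
  have := card_cl_le G x u
  omega

lemma boundary_of_cheeger {b : ℝ} (hb : 0 < b) (hC : CheegerGT G b) (K : Finset V)
    (h1 : K.Nonempty) (h2 : K ≠ Finset.univ) : ∃ a ∈ K, ∃ c, c ∉ K ∧ G.Adj a c := by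
  have hcard : K.card + Kᶜ.card = Fintype.card V := Finset.card_add_card_compl K
  have hn : ∀ S : Finset V, S.Nonempty → 2 * S.card ≤ Fintype.card V →
      ∃ a ∈ S, ∃ c, c ∉ S ∧ G.Adj a c := by
    intro S hS hS2
    have := hC (S : Set V) (by rw [Set.ncard_coe_finset]; exact hS.card_pos)
      (by rw [Set.ncard_coe_finset, Nat.card_eq_fintype_card]; exact hS2)
    have hpos : 0 < edgeBoundaryCard G (S : Set V) := by
      have h0 : 0 ≤ b * ((S : Set V).ncard : ℝ) := by positivity
      exact_mod_cast lt_of_le_of_lt h0 this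
    unfold edgeBoundaryCard at hpos
    have hne := Set.nonempty_of_ncard_ne_zero hpos.ne'
    obtain ⟨⟨a, c⟩, h, ha, hc⟩ := hne
    exact ⟨a, by simpa using ha, c, by simpa using hc, h⟩
  by_cases hK : 2 * K.card ≤ Fintype.card V
  · exact hn K h1 hK
  · have hne : Kᶜ.Nonempty := by
      rw [Finset.nonempty_iff_ne_empty]
      intro h
      exact h2 (by simpa using h)
    obtain ⟨a, ha, c, hc, hac⟩ := hn Kᶜ hne (by omega)
    exact ⟨c, by simpa using hc, a, by simpa using ha, hac.symm⟩

lemma pivotal_of_isolated {b : ℝ} (hb : 0 < b) (hC : CheegerGT G b) (hn : 2 ≤ Fintype.card V)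
    (x : G.edgeSet → Bool) (v : V) (hv : ∀ e : G.edgeSet, v ∈ (e : Sym2 V) → x e = false) :
    ∃ e, 1 ≤ grd (LR G) e x := by
  have : Nonempty V := ⟨v⟩
  obtain ⟨z, hz⟩ := exists_cl G x
  have hiso : ∀ w, (percoGraph G x).Reachable v w → w = v := by
    rintro w ⟨W⟩
    cases W with
    | nil => rfl
    | cons h W =>
      exfalso
      rw [perco_adj] at h
      obtain ⟨k, hk⟩ := h
      rw [hv _ (by simp)] at hk
      exact absurd hk (by simp)
  have hne : cl G x z ≠ Finset.univ := by
    intro h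
    have hvz : v ∈ cl G x z := by rw [h]; simp
    have h3 : cl G x v = Finset.univ := by rw [cl_eq G hvz, h]
    have h4 : (cl G x v).card ≤ 1 := by
      rw [Finset.card_le_one]
      intro a ha c hc
      rw [mem_cl] at ha hc
      rw [hiso a ha, hiso c hc]
    rw [h3, Finset.card_univ] at h4
    omega
  obtain ⟨a, ha, c, hc, hac⟩ := boundary_of_cheeger G hb hC _ ⟨z, self_mem_cl G x z⟩ hne
  refine ⟨⟨s(a, c), hac⟩, le_trans ?_ (grd_ge G x _)⟩
  set y := setEdge x ⟨s(a, c), hac⟩ true with hy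
  have hsub : insert c (cl G x z) ⊆ cl G y a := by
    have h5 : cl G x z ⊆ cl G y a := by
      rw [← cl_eq G ha]
      exact cl_mono G (le_set_true G x _) a
    intro w hw
    rcases Finset.mem_insert.1 hw with rfl | hw
    · rw [mem_cl]
      apply SimpleGraph.Adj.reachable
      rw [perco_adj]
      exact ⟨hac, by simp [hy]⟩
    · exact h5 hw
  have h6 := (Finset.card_le_card hsub).trans (card_cl_le G y a)
  rw [Finset.card_insert_of_notMem hc, hz] at h6
  unfold LR
  have : ((largestComp G x + 1 : ℕ) : ℝ) ≤ largestComp G y := by exact_mod_cast h6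
  push_cast at this
  linarith

/-- The total influence. -/
def Sinf (p : ℝ) : ℝ := ∑ e, Ex p (grd (LR G) e)

lemma incident_card {d : ℕ} (hd : DegreeLE G d) (v : V) :
    (Finset.univ.filter fun e : G.edgeSet => v ∈ (e : Sym2 V)).card ≤ d := by
  have h := hd v
  rw [Set.ncard_eq_toFinset_card'] at h
  refine le_trans ?_ h
  rw [← Finset.card_image_of_injective _ Subtype.val_injective]
  refine le_trans (Finset.card_le_card ?_) (Finset.card_image_le (f := fun u => s(v, u)))
  intro t ht
  simp only [Finset.mem_image, Finset.mem_filter, Finset.mem_univ, true_and] at ht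
  obtain ⟨e, he, rfl⟩ := ht
  obtain ⟨w, hw⟩ := he
  rw [Finset.mem_image]
  refine ⟨w, ?_, hw.symm⟩
  have := e.2
  rw [hw] at this
  simpa using this

lemma card_edges_le {d : ℕ} (hd : DegreeLE G d) :
    Fintype.card G.edgeSet ≤ d * Fintype.card V := by
  have h1 : (Finset.univ : Finset G.edgeSet) ⊆
      Finset.univ.biUnion fun v : V => Finset.univ.filter fun e : G.edgeSet => v ∈ (e : Sym2 V) := by
    intro e _
    rw [Finset.mem_biUnion]
    obtain ⟨⟨a, c⟩, h⟩ := e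
    exact ⟨a, by simp, by simp⟩
  have h2 := (Finset.card_le_card h1).trans Finset.card_biUnion_le
  rw [Finset.card_univ] at h2
  refine h2.trans ?_
  calc _ ≤ ∑ v : V, d := Finset.sum_le_sum fun v _ => incident_card G hd v
    _ = _ := by simp [mul_comm]

lemma Sinf_nonneg {p : ℝ} (h0 : 0 ≤ p) (h1 : p ≤ 1) : 0 ≤ Sinf G p :=
  Finset.sum_nonneg fun e _ => Ex_nonneg h0 h1 fun x => grd_nonneg G x e

lemma Sinf_ge {b : ℝ} (hb : 0 < b) (hC : CheegerGT G b) (hn : 2 ≤ Fintype.card V) {d : ℕ}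
    (hd : DegreeLE G d) {p : ℝ} (h0 : 0 ≤ p) (h1 : p ≤ 1) : (1 - p) ^ d ≤ Sinf G p := by
  have hne : Nonempty V := Fintype.card_pos_iff.1 (by omega)
  obtain ⟨v⟩ := hne
  have h2 : Ex p (fun x : G.edgeSet → Bool =>
      ∏ e : G.edgeSet, (if v ∈ (e : Sym2 V) then (if x e then (0:ℝ) else 1) else 1)) ≤ Sinf G p := by
    unfold Sinf
    rw [← Ex_sum]
    apply Ex_mono h0 h1
    intro x
    by_cases hv : ∀ e : G.edgeSet, v ∈ (e : Sym2 V) → x e = false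
    · obtain ⟨e, he⟩ := pivotal_of_isolated G hb hC hn x v hv
      have h3 : grd (LR G) e x ≤ ∑ e, grd (LR G) e x :=
        Finset.single_le_sum (f := fun e => grd (LR G) e x) (fun e _ => grd_nonneg G x e)
          (Finset.mem_univ e)
      refine le_trans ?_ (he.trans h3)
      apply Finset.prod_le_one
      · intro i _; split_ifs <;> norm_num
      · intro i _; split_ifs <;> norm_num
    · push Not at hv
      obtain ⟨e, he, hx⟩ := hv
      rw [Finset.prod_eq_zero (Finset.mem_univ e) (by simp [he, hx])]
      exact Finset.sum_nonneg fun e _ => grd_nonneg G x e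
  refine le_trans ?_ h2
  rw [Ex_prod p (fun (e : G.edgeSet) c => if v ∈ (e : Sym2 V) then (if c then (0:ℝ) else 1) else 1)]
  have h4 : ∏ e : G.edgeSet, (p * (if v ∈ (e : Sym2 V) then (if true then (0:ℝ) else 1) else 1) +
      (1 - p) * (if v ∈ (e : Sym2 V) then (if false then (0:ℝ) else 1) else 1)) =
      ∏ e : G.edgeSet, if v ∈ (e : Sym2 V) then (1 - p) else 1 := by
    apply Finset.prod_congr rfl
    intro e _
    split_ifs <;> simp_all
  simp only [Bool.false_eq_true] at h4 ⊢
  rw [h4, ← Finset.prod_filter, Finset.prod_const]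
  exact pow_le_pow_of_le_one (by linarith) (by linarith) (incident_card G hd v)

/-- number of closed edges with a large derivative -/
def bigN (k : ℝ) (x : G.edgeSet → Bool) : ℝ :=
  ∑ e, if x e then 0 else if k ≤ grd (LR G) e x then 1 else 0

lemma var_bound {p : ℝ} (h0 : 0 ≤ p) (h1 : p ≤ 1) {k : ℝ} (hk : 0 ≤ k) :
    varC p (LR G) ≤ k * Sinf G p + (Fintype.card V : ℝ) ^ 2 * Ex p (bigN G k) := by
  have hq : 0 ≤ 1 - p := by linarith
  have hpq : p * (1 - p) ≤ 1 := by nlinarith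
  refine (poincare h0 h1 (LR G)).trans ?_
  have e1 : Ex p (bigN G k) =
      ∑ e, (1 - p) * Ex p (fun x => if k ≤ grd (LR G) e x then 1 else 0) := by
    unfold bigN
    rw [Ex_sum]
    apply Finset.sum_congr rfl
    intro e _
    rw [← Ex_closed]
    intro x b
    rw [grd_set]
  rw [e1, Sinf, Finset.mul_sum, Finset.mul_sum, Finset.mul_sum, ← Finset.sum_add_distrib]
  apply Finset.sum_le_sum
  intro e _
  have h2 : Ex p (fun x => grd (LR G) e x ^ 2) ≤ k * Ex p (grd (LR G) e) +
      (Fintype.card V : ℝ) ^ 2 * Ex p (fun x => if k ≤ grd (LR G) e x then 1 else 0) := by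
    rw [← Ex_mul, ← Ex_mul, ← Ex_add]
    apply Ex_mono h0 h1
    intro x
    have g0 := grd_nonneg G x e
    have g1 := grd_le G x e
    split_ifs with h
    · have : 0 ≤ k * grd (LR G) e x := mul_nonneg hk g0
      nlinarith
    · push Not at h
      nlinarith
  have a1 : 0 ≤ k * Ex p (grd (LR G) e) :=
    mul_nonneg hk (Ex_nonneg h0 h1 fun x => grd_nonneg G x e)
  have a2 : 0 ≤ (Fintype.card V : ℝ) ^ 2 * Ex p (fun x => if k ≤ grd (LR G) e x then (1:ℝ) else 0) := by
    apply mul_nonneg (by positivity)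
    apply Ex_nonneg h0 h1
    intro x; split_ifs <;> norm_num
  have h3 := mul_le_mul_of_nonneg_left h2 (mul_nonneg h0 hq)
  refine h3.trans ?_
  rw [mul_add]
  apply add_le_add
  · nlinarith
  · have := mul_le_mul_of_nonneg_right h1 (mul_nonneg hq a2)
    nlinarith

lemma var_bound0 {p : ℝ} (h0 : 0 ≤ p) (h1 : p ≤ 1) :
    varC p (LR G) ≤ Fintype.card V * Sinf G p := by
  refine (poincare h0 h1 (LR G)).trans ?_
  have hpq : p * (1 - p) ≤ 1 := by nlinarith
  have h2 : ∑ e, Ex p (fun x => grd (LR G) e x ^ 2) ≤ Fintype.card V * Sinf G p := by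
    rw [Sinf, Finset.mul_sum]
    apply Finset.sum_le_sum
    intro e _
    rw [← Ex_mul]
    apply Ex_mono h0 h1
    intro x
    have g0 := grd_nonneg G x e
    have g1 := grd_le G x e
    nlinarith
  have h3 : 0 ≤ ∑ e, Ex p (fun x => grd (LR G) e x ^ 2) :=
    Finset.sum_nonneg fun e _ => Ex_nonneg h0 h1 fun x => sq_nonneg _
  nlinarith

end Graph

section Paths

open Classical

variable {V : Type*} [Fintype V] (G : SimpleGraph V)

/-- open the edge `vw` -/
def openE (x : G.edgeSet → Bool) (v w : V) : G.edgeSet → Bool :=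
  if h : G.Adj v w then setEdge x ⟨s(v, w), h⟩ true else x

lemma le_openE (x : G.edgeSet → Bool) (v w : V) : ∀ e, x e = true → openE G x v w e = true := by
  intro e he
  unfold openE
  split_ifs with h
  · exact le_set_true G x _ e he
  · exact he

lemma LR_mono {x y : G.edgeSet → Bool} (h : ∀ e, x e = true → y e = true) : LR G x ≤ LR G y := by
  unfold LR
  exact_mod_cast L_mono G h

/-- the sum over walks -/
def MM : ℕ → (G.edgeSet → Bool) → V → ℝ
  | 0, x, v => ∑ w, (LR G (openE G x v w) - LR G x)
  | j + 1, x, v => ∑ w ∈ Finset.univ.filter (fun w => G.Adj v w), MM j (openE G x v w) w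

lemma MM_nonneg (j : ℕ) : ∀ x v, 0 ≤ MM G j x v := by
  induction j with
  | zero =>
    intro x v
    simp only [MM]
    apply Finset.sum_nonneg
    intro w _
    have := LR_mono G (le_openE G x v w)
    linarith
  | succ j ih =>
    intro x v
    simp only [MM]
    exact Finset.sum_nonneg fun w _ => ih _ _

lemma MM_zero_sum {p : ℝ} (h0 : 0 ≤ p) (h1 : p ≤ 1) :
    ∑ v, Ex p (fun x => MM G 0 x v) ≤ 2 * Sinf G p := by
  set φ : Sym2 V → ℝ := fun t => if h : t ∈ G.edgeSet then Ex p (grd (LR G) ⟨t, h⟩) else 0 with hφ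
  have hφ0 : ∀ t, 0 ≤ φ t := by
    intro t
    simp only [hφ]
    split_ifs with h
    · exact Ex_nonneg h0 h1 fun x => grd_nonneg G x _
    · exact le_rfl
  have s1 : ∀ v, Ex p (fun x => MM G 0 x v) ≤ ∑ t : Sym2 V, if v ∈ t then φ t else 0 := by
    intro v
    simp only [MM]
    rw [Ex_sum]
    calc ∑ w, Ex p (fun x => LR G (openE G x v w) - LR G x) ≤ ∑ w, φ s(v, w) := by
          apply Finset.sum_le_sum
          intro w _
          by_cases h : G.Adj v w
          · have : φ s(v, w) = Ex p (grd (LR G) ⟨s(v, w), h⟩) := by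
              simp only [hφ]; rw [dif_pos (show s(v, w) ∈ G.edgeSet from h)]
            rw [this]
            apply Ex_mono h0 h1
            intro x
            simp only [openE, h, dif_pos]
            exact grd_ge G x _
          · have : (fun x => LR G (openE G x v w) - LR G x) = fun _ => 0 := by
              funext x; simp [openE, h]
            rw [this, Ex_const]
            exact hφ0 _
      _ = ∑ t ∈ Finset.univ.image (fun w => s(v, w)), φ t := by
          rw [Finset.sum_image]
          intro a _ c _ hac
          have hac2 : a = c ∨ v = c ∧ a = v := by simpa using hac
          rcases hac2 with h | ⟨h1, h2⟩
          · exact h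
          · rw [h2, h1]
      _ ≤ ∑ t ∈ Finset.univ.filter (fun t : Sym2 V => v ∈ t), φ t := by
          apply Finset.sum_le_sum_of_subset_of_nonneg
          · intro t ht
            obtain ⟨w, _, rfl⟩ := Finset.mem_image.1 ht
            simp
          · intro t _ _; exact hφ0 t
      _ = _ := by rw [Finset.sum_filter]
  calc _ ≤ ∑ v, ∑ t : Sym2 V, (if v ∈ t then φ t else 0) := Finset.sum_le_sum fun v _ => s1 v
    _ = ∑ t : Sym2 V, ∑ v, (if v ∈ t then φ t else 0) := Finset.sum_comm
    _ ≤ ∑ t : Sym2 V, 2 * φ t := by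
        apply Finset.sum_le_sum
        intro t _
        rw [← Finset.sum_filter, Finset.sum_const, nsmul_eq_mul]
        apply mul_le_mul_of_nonneg_right _ (hφ0 t)
        have : (Finset.univ.filter fun v => v ∈ t).card ≤ 2 := by
          induction t with
          | _ a c =>
            refine le_trans (Finset.card_le_card (t := {a, c}) ?_) Finset.card_le_two
            intro v hv
            simpa using hv
        exact_mod_cast this
    _ = 2 * ∑ t : Sym2 V, φ t := by rw [Finset.mul_sum]
    _ = 2 * Sinf G p := by
        congr 1
        unfold Sinf
        have : ∑ t : Sym2 V, φ t = ∑ t ∈ Finset.univ.filter (fun t => t ∈ G.edgeSet), φ t := by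
          rw [Finset.sum_filter]
          apply Finset.sum_congr rfl
          intro t _
          simp only [hφ]
          split_ifs <;> rfl
        rw [this, ← Finset.sum_subtype_eq_sum_filter]
        simp only [Finset.subtype_univ]
        apply Finset.sum_congr
        · ext; simp
        · intro e _
          simp only [hφ]
          rw [dif_pos e.2]

lemma MM_sum {d : ℕ} (hd : DegreeLE G d) {p : ℝ} (h0 : 0 < p) (h1 : p ≤ 1) (j : ℕ) :
    ∑ v, Ex p (fun x => MM G j x v) ≤ (d / p) ^ j * (2 * Sinf G p) := by
  induction j with
  | zero => simpa using MM_zero_sum G h0.le h1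
  | succ j ih =>
    have hdeg : ∀ w, ((Finset.univ.filter fun v => G.Adj v w).card : ℝ) ≤ d := by
      intro w
      have h := hd w
      rw [Set.ncard_eq_toFinset_card'] at h
      have : (Finset.univ.filter fun v => G.Adj v w).card ≤ d := by
        refine le_trans (Finset.card_le_card ?_) h
        intro v hv
        simp at hv ⊢
        exact hv.symm
      exact_mod_cast this
    calc ∑ v, Ex p (fun x => MM G (j + 1) x v)
        = ∑ v, ∑ w ∈ Finset.univ.filter (fun w => G.Adj v w),
            Ex p (fun x => MM G j (openE G x v w) w) := by
          apply Finset.sum_congr rfl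
          intro v _
          simp only [MM]
          rw [Ex_sum]
      _ ≤ ∑ v, ∑ w ∈ Finset.univ.filter (fun w => G.Adj v w), (1 / p) * Ex p (fun x => MM G j x w) := by
          apply Finset.sum_le_sum
          intro v _
          apply Finset.sum_le_sum
          intro w hw
          have h : G.Adj v w := by simpa using hw
          simp only [openE, h, dif_pos]
          exact Ex_open_le h0 h1 _ (fun x => MM G j x w) (fun x => MM_nonneg G j x w)
      _ = ∑ w, ∑ v ∈ Finset.univ.filter (fun v => G.Adj v w), (1 / p) * Ex p (fun x => MM G j x w) := by
          simp only [Finset.sum_filter]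
          rw [Finset.sum_comm]
      _ ≤ ∑ w, (d / p) * Ex p (fun x => MM G j x w) := by
          apply Finset.sum_le_sum
          intro w _
          have hE : 0 ≤ Ex p (fun x => MM G j x w) := Ex_nonneg h0.le h1 fun x => MM_nonneg G j x w
          rw [Finset.sum_const, nsmul_eq_mul, ← mul_assoc, mul_one_div]
          have := hdeg w
          gcongr
      _ = (d / p) * ∑ w, Ex p (fun x => MM G j x w) := by rw [Finset.mul_sum]
      _ ≤ (d / p) * ((d / p) ^ j * (2 * Sinf G p)) := by gcongr
      _ = _ := by ring

/-- outer boundary -/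
def outN (B : Finset V) : Finset V := Finset.univ.filter fun v => v ∉ B ∧ ∃ u ∈ B, G.Adj u v

/-- balls -/
def ballN (B : Finset V) : ℕ → Finset V
  | 0 => B
  | r + 1 => ballN B r ∪ outN G (ballN B r)

lemma telescoping (B : Finset V) (r : ℕ) : ∀ (x : G.edgeSet → Bool), ∀ v ∈ ballN G B r,
    ∃ y : G.edgeSet → Bool, (∀ e, x e = true → y e = true) ∧
      (∃ w ∈ B, (percoGraph G y).Reachable v w) ∧
      LR G y - LR G x ≤ ∑ j ∈ Finset.range r, MM G j x v := by
  induction r with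
  | zero =>
    intro x v hv
    exact ⟨x, fun _ h => h, ⟨v, hv, SimpleGraph.Reachable.refl _⟩, by simp⟩
  | succ r ih =>
    intro x v hv
    simp only [ballN, Finset.mem_union] at hv
    rcases hv with hv | hv
    · obtain ⟨y, h1, h2, h3⟩ := ih x v hv
      refine ⟨y, h1, h2, h3.trans ?_⟩
      rw [Finset.sum_range_succ]
      have := MM_nonneg G r x v
      linarith
    · simp only [outN, Finset.mem_filter, Finset.mem_univ, true_and] at hv
      obtain ⟨_, w, hw, hwv⟩ := hv
      obtain ⟨y, h1, ⟨u, hu, h2⟩, h3⟩ := ih (openE G x v w) w hw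
      refine ⟨y, fun e he => h1 e (le_openE G x v w e he), ⟨u, hu, ?_⟩, ?_⟩
      · refine SimpleGraph.Reachable.trans (SimpleGraph.Adj.reachable ?_) h2
        rw [perco_adj]
        refine ⟨hwv.symm, h1 _ ?_⟩
        simp [openE, hwv.symm]
      · rw [Finset.sum_range_succ']
        have a1 : LR G (openE G x v w) - LR G x ≤ MM G 0 x v := by
          simp only [MM]
          apply Finset.single_le_sum (f := fun w => LR G (openE G x v w) - LR G x) _ (Finset.mem_univ w)
          intro i _
          have := LR_mono G (le_openE G x v i)
          exact sub_nonneg.2 this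
        have a2 : ∑ j ∈ Finset.range r, MM G j (openE G x v w) w ≤
            ∑ j ∈ Finset.range r, MM G (j + 1) x v := by
          apply Finset.sum_le_sum
          intro j _
          simp only [MM]
          apply Finset.single_le_sum (f := fun w => MM G j (openE G x v w) w)
          · intro i _; exact MM_nonneg G j _ _
          · simp [hwv.symm]
        linarith

lemma boundary_le {d : ℕ} (hd : DegreeLE G d) (S : Finset V) :
    edgeBoundaryCard G (S : Set V) ≤ d * (outN G S).card := by
  unfold edgeBoundaryCard
  rw [Set.ncard_eq_toFinset_card']
  have hsub : ({q : V × V | G.Adj q.1 q.2 ∧ q.1 ∈ (S : Set V) ∧ q.2 ∉ (S : Set V)}).toFinset ⊆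
      (outN G S).biUnion fun v => (Finset.univ.filter fun u => G.Adj v u).image fun u => (u, v) := by
    rintro ⟨a, c⟩ h
    simp only [Set.mem_toFinset, Set.mem_ofPred_eq, Finset.mem_coe] at h
    simp only [Finset.mem_biUnion, Finset.mem_image, Finset.mem_filter, Finset.mem_univ, true_and,
      outN]
    exact ⟨c, ⟨h.2.2, a, h.2.1, h.1⟩, a, h.1.symm, rfl⟩
  refine (Finset.card_le_card hsub).trans (Finset.card_biUnion_le.trans ?_)
  calc _ ≤ ∑ v ∈ outN G S, d := by
        apply Finset.sum_le_sum
        intro v _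
        refine Finset.card_image_le.trans ?_
        have h := hd v
        rw [Set.ncard_eq_toFinset_card'] at h
        refine le_trans (Finset.card_le_card ?_) h
        intro v hv
        simpa using hv
    _ = _ := by simp [mul_comm]

lemma boundary_compl (S : Finset V) :
    edgeBoundaryCard G ((Sᶜ : Finset V) : Set V) = edgeBoundaryCard G (S : Set V) := by
  unfold edgeBoundaryCard
  apply Set.ncard_congr (fun q _ => (q.2, q.1))
  · rintro ⟨a, c⟩ ⟨h1, h2, h3⟩
    simp at h1 h2 h3 ⊢
    exact ⟨h1.symm, h3, h2⟩
  · rintro ⟨a, c⟩ ⟨a', c'⟩ _ _ h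
    simp at h ⊢
    exact ⟨h.2, h.1⟩
  · rintro ⟨a, c⟩ ⟨h1, h2, h3⟩
    simp at h1 h2 h3
    exact ⟨(c, a), by simp [h1.symm, h2, h3], rfl⟩

lemma card_outN_small {b : ℝ} (hb : 0 < b) (hC : CheegerGT G b) {d : ℕ} (hd : DegreeLE G d)
    (S : Finset V) (h2 : 2 * S.card ≤ Fintype.card V) :
    b * S.card ≤ d * (outN G S).card := by
  rcases Finset.eq_empty_or_nonempty S with rfl | hne
  · simp; positivity
  have := hC (S : Set V) (by rw [Set.ncard_coe_finset]; exact hne.card_pos)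
    (by rw [Set.ncard_coe_finset, Nat.card_eq_fintype_card]; exact h2)
  rw [Set.ncard_coe_finset] at this
  have h3 : (edgeBoundaryCard G (S : Set V) : ℝ) ≤ d * (outN G S).card := by
    exact_mod_cast boundary_le G hd S
  linarith

lemma card_outN_large {b : ℝ} (hb : 0 < b) (hC : CheegerGT G b) {d : ℕ} (hd : DegreeLE G d)
    (S : Finset V) (h2 : 2 * Sᶜ.card ≤ Fintype.card V) :
    b * Sᶜ.card ≤ d * (outN G S).card := by
  rcases Finset.eq_empty_or_nonempty Sᶜ with he | hne
  · rw [he]; simp; positivity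
  have := hC ((Sᶜ : Finset V) : Set V) (by rw [Set.ncard_coe_finset]; exact hne.card_pos)
    (by rw [Set.ncard_coe_finset, Nat.card_eq_fintype_card]; exact h2)
  rw [Set.ncard_coe_finset, boundary_compl] at this
  have h3 : (edgeBoundaryCard G (S : Set V) : ℝ) ≤ d * (outN G S).card := by
    exact_mod_cast boundary_le G hd S
  linarith

lemma card_ball_succ (B : Finset V) (r : ℕ) :
    (ballN G B (r + 1)).card = (ballN G B r).card + (outN G (ballN G B r)).card := by
  simp only [ballN]
  rw [Finset.card_union_of_disjoint]
  rw [Finset.disjoint_right]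
  intro v hv
  simp only [outN, Finset.mem_filter] at hv
  exact hv.2.1

lemma expansion {b : ℝ} (hb : 0 < b) (hC : CheegerGT G b) {d : ℕ} (hd : DegreeLE G d) (hd0 : 0 < d)
    (hbd : b ≤ d) (B : Finset V) (r : ℕ) (hn : 0 < Fintype.card V)
    (hB : (Fintype.card V : ℝ) / (1 + b / d) ^ r ≤ B.card) :
    ((ballN G B (r + r))ᶜ.card : ℝ) ≤ Fintype.card V / (1 + b / d) ^ r / 2 := by
  set n : ℝ := (Fintype.card V : ℝ) with hnn
  have hn0 : 0 < n := by rw [hnn]; exact_mod_cast hn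
  set τ : ℝ := 1 + b / d with hτ
  have hdr : (0:ℝ) < d := by exact_mod_cast hd0
  have hβ0 : 0 < b / d := by positivity
  have hβ1 : b / d ≤ 1 := by rw [div_le_one hdr]; exact hbd
  have hτ0 : 0 < τ := by positivity
  have hout : ∀ S : Finset V, ∀ c : ℝ, b * c ≤ d * (outN G S).card → b / d * c ≤ (outN G S).card := by
    intro S c h
    rw [div_mul_eq_mul_div, div_le_iff₀ hdr]
    linarith
  have step1 : ∀ j, n / τ ^ r * τ ^ j ≤ (ballN G B j).card ∨ n / 2 < (ballN G B j).card := by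
    intro j
    induction j with
    | zero => left; simpa [ballN] using hB
    | succ j ih =>
      rw [card_ball_succ]
      push_cast
      have o0 : (0:ℝ) ≤ (outN G (ballN G B j)).card := by positivity
      by_cases hs : 2 * (ballN G B j).card ≤ Fintype.card V
      · left
        have hs' : ((ballN G B j).card : ℝ) ≤ n / 2 := by
          have : ((2 * (ballN G B j).card : ℕ) : ℝ) ≤ n := by rw [hnn]; exact_mod_cast hs
          push_cast at this; linarith
        have hcase : n / τ ^ r * τ ^ j ≤ (ballN G B j).card := by
          rcases ih with h | h
          · exact h
          · linarith
        have := hout _ _ (card_outN_small G hb hC hd _ hs)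
        rw [pow_succ, ← mul_assoc]
        calc n / τ ^ r * τ ^ j * τ ≤ (ballN G B j).card * τ := by gcongr
          _ = (ballN G B j).card + b / d * (ballN G B j).card := by rw [hτ]; ring
          _ ≤ _ := by linarith
      · right
        have : n < ((2 * (ballN G B j).card : ℕ) : ℝ) := by
          rw [hnn]; push Not at hs; exact_mod_cast hs
        push_cast at this
        linarith
  have hr : n / 2 < (ballN G B r).card := by
    rcases step1 r with h | h
    · rw [div_mul_cancel₀ _ (by positivity)] at h; linarith
    · exact h
  have hcompl : ∀ S : Finset V, ((Sᶜ.card : ℕ) : ℝ) = n - S.card := by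
    intro S
    have : S.card + Sᶜ.card = Fintype.card V := Finset.card_add_card_compl S
    rw [hnn, ← this]; push_cast; ring
  have step2 : ∀ j, ((ballN G B (r + j))ᶜ.card : ℝ) ≤ n / 2 / τ ^ j := by
    intro j
    induction j with
    | zero => rw [hcompl]; simp; linarith
    | succ j ih =>
      have hle : ((ballN G B (r + j))ᶜ.card : ℝ) ≤ n / 2 := by
        refine ih.trans ?_
        apply div_le_self (by positivity)
        apply one_le_pow₀
        rw [hτ]; linarith
      have := hout _ _ (card_outN_large G hb hC hd (ballN G B (r + j)) (by
        have : ((2 * (ballN G B (r + j))ᶜ.card : ℕ) : ℝ) ≤ n := by push_cast; linarith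
        rw [hnn] at this
        exact_mod_cast this))
      rw [hcompl, ← add_assoc, card_ball_succ]
      have hc0 : (0:ℝ) ≤ ((ballN G B (r + j))ᶜ.card : ℝ) := by positivity
      have e1 := hcompl (ballN G B (r + j))
      push_cast
      have e2 : n - (((ballN G B (r + j)).card : ℝ) + (outN G (ballN G B (r + j))).card) ≤
        (1 - b / d) * ((ballN G B (r + j))ᶜ.card : ℝ) := by
        rw [e1] at this ⊢; linarith
      refine e2.trans ?_
      rw [pow_succ, ← div_div, le_div_iff₀ hτ0]
      calc (1 - b / d) * ((ballN G B (r + j))ᶜ.card : ℝ) * τ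
          = (1 - (b / d) ^ 2) * ((ballN G B (r + j))ᶜ.card : ℝ) := by rw [hτ]; ring
        _ ≤ 1 * ((ballN G B (r + j))ᶜ.card : ℝ) := by
            gcongr
            nlinarith
        _ ≤ _ := by rw [one_mul]; exact ih
  have := step2 r
  rw [div_right_comm] at this
  exact this

/-- two big clusters merging -/
def isF (k : ℝ) (x : G.edgeSet → Bool) : Prop := ∃ e, x e = false ∧ k ≤ grd (LR G) e x

lemma isF_spec {k : ℝ} (hk : 0 < k) (x : G.edgeSet → Bool) (e : G.edgeSet) (he : x e = false)
    (hg : k ≤ grd (LR G) e x) (u v : V) (huv : (e : Sym2 V) = s(u, v)) :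
    v ∉ cl G x u ∧ LR G x + k ≤ (cl G x u).card + (cl G x v).card ∧ k ≤ (cl G x u).card ∧
      k ≤ (cl G x v).card := by
  obtain ⟨t, ht⟩ := e
  simp only at huv
  subst huv
  have hx : setEdge x ⟨s(u, v), ht⟩ false = x := by
    have := setEdge_self x ⟨s(u, v), ht⟩
    rwa [he] at this
  unfold grd at hg
  rw [hx] at hg
  unfold LR at *
  have hlt : largestComp G x < largestComp G (setEdge x ⟨s(u, v), ht⟩ true) := by
    have : (largestComp G x : ℝ) < largestComp G (setEdge x ⟨s(u, v), ht⟩ true) := by linarith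
    exact_mod_cast this
  obtain ⟨h1, h2⟩ := join G x u v ht hlt
  have h2' : (largestComp G (setEdge x ⟨s(u, v), ht⟩ true) : ℝ) ≤
    (cl G x u).card + (cl G x v).card := by exact_mod_cast h2
  have h3 : ((cl G x u).card : ℝ) ≤ largestComp G x := by exact_mod_cast card_cl_le G x u
  have h4 : ((cl G x v).card : ℝ) ≤ largestComp G x := by exact_mod_cast card_cl_le G x v
  refine ⟨h1, by linarith, by linarith, by linarith⟩

lemma path_lower {b : ℝ} (hb : 0 < b) (hC : CheegerGT G b) {d : ℕ} (hd : DegreeLE G d) (hd0 : 0 < d)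
    (hbd : b ≤ d) (r : ℕ) (hn : 0 < Fintype.card V) (k : ℝ)
    (hk : k = (Fintype.card V : ℝ) / (1 + b / d) ^ r) (x : G.edgeSet → Bool) (hF : isF G k x) :
    k / 2 * k ≤ ∑ j ∈ Finset.range (r + r), ∑ v, MM G j x v := by
  have hn' : (0:ℝ) < Fintype.card V := by exact_mod_cast hn
  have hk0 : 0 < k := by rw [hk]; positivity
  obtain ⟨e, he, hg⟩ := hF
  obtain ⟨u, v, huv⟩ : ∃ u v, (e : Sym2 V) = s(u, v) := by
    obtain ⟨⟨a, c⟩, h⟩ := e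
    exact ⟨a, c, rfl⟩
  obtain ⟨h1, h2, h3, h4⟩ := isF_spec G hk0 x e he hg u v huv
  have hexp := expansion G hb hC hd hd0 hbd (cl G x v) r hn (by rw [← hk]; exact h4)
  rw [← hk] at hexp
  set Bl := ballN G (cl G x v) (r + r)
  have hcard : k / 2 ≤ (cl G x u ∩ Bl).card := by
    have : (cl G x u).card ≤ (cl G x u ∩ Bl).card + Blᶜ.card := by
      rw [← Finset.card_inter_add_card_sdiff (cl G x u) Bl]
      gcongr
      intro a ha
      simp at ha ⊢
      exact ha.2
    have : ((cl G x u).card : ℝ) ≤ (cl G x u ∩ Bl).card + Blᶜ.card := by exact_mod_cast this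
    linarith
  have hpt : ∀ a ∈ cl G x u ∩ Bl, k ≤ ∑ j ∈ Finset.range (r + r), MM G j x a := by
    intro a ha
    rw [Finset.mem_inter] at ha
    obtain ⟨y, y1, ⟨w, hw, y2⟩, y3⟩ := telescoping G (cl G x v) (r + r) x a ha.2
    refine le_trans ?_ y3
    have hsub : cl G x u ∪ cl G x v ⊆ cl G y a := by
      apply Finset.union_subset
      · rw [← cl_eq G ha.1]; exact cl_mono G y1 a
      · rw [← cl_eq G hw]
        refine (cl_mono G y1 w).trans ?_
        rw [cl_eq G ((mem_cl G).2 y2)]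
    have hc := (Finset.card_le_card hsub).trans (card_cl_le G y a)
    rw [Finset.card_union_of_disjoint (cl_disj G h1)] at hc
    have hc' : ((cl G x u).card : ℝ) + (cl G x v).card ≤ LR G y := by
      unfold LR; exact_mod_cast hc
    linarith
  rw [Finset.sum_comm]
  calc k / 2 * k ≤ (cl G x u ∩ Bl).card * k := by gcongr
    _ = ∑ a ∈ cl G x u ∩ Bl, k := by simp
    _ ≤ ∑ a ∈ cl G x u ∩ Bl, ∑ j ∈ Finset.range (r + r), MM G j x a := Finset.sum_le_sum hpt
    _ ≤ _ := by
      apply Finset.sum_le_sum_of_subset_of_nonneg (Finset.subset_univ _)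
      intro a _ _
      exact Finset.sum_nonneg fun j _ => MM_nonneg G j x a

lemma prob_F {b : ℝ} (hb : 0 < b) (hC : CheegerGT G b) {d : ℕ} (hd : DegreeLE G d) (hd0 : 0 < d)
    (hbd : b ≤ d) (r : ℕ) (hn : 0 < Fintype.card V) (k : ℝ)
    (hk : k = (Fintype.card V : ℝ) / (1 + b / d) ^ r) {p D : ℝ} (h0 : 0 < p) (h1 : p ≤ 1)
    (hD1 : 1 ≤ D) (hD : d / p ≤ D) :
    Ex p (fun x => if isF G k x then 1 else 0) * k ^ 2 ≤ 8 * r * (D ^ 2) ^ r * Sinf G p := by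
  have hn' : (0:ℝ) < Fintype.card V := by exact_mod_cast hn
  have hk0 : 0 < k := by rw [hk]; positivity
  have hS := Sinf_nonneg G h0.le h1
  have hm := markov h0.le h1 (isF G k) (fun x => ∑ j ∈ Finset.range (r + r), ∑ v, MM G j x v)
    (fun x => Finset.sum_nonneg fun j _ => Finset.sum_nonneg fun v _ => MM_nonneg G j x v)
    (k / 2 * k) (by positivity) (fun x hx => path_lower G hb hC hd hd0 hbd r hn k hk x hx)
  rw [le_div_iff₀ (by positivity), Ex_sum] at hm
  have h2 : ∑ j ∈ Finset.range (r + r), Ex p (fun x => ∑ v, MM G j x v) ≤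
      ∑ j ∈ Finset.range (r + r), D ^ (r + r) * (2 * Sinf G p) := by
    apply Finset.sum_le_sum
    intro j hj
    rw [Ex_sum]
    refine (MM_sum G hd h0 h1 j).trans ?_
    apply mul_le_mul_of_nonneg_right _ (by positivity)
    calc ((d:ℝ) / p) ^ j ≤ D ^ j := by gcongr
      _ ≤ D ^ (r + r) := pow_le_pow_right₀ hD1 (Finset.mem_range.1 hj).le
  rw [Finset.sum_const, Finset.card_range, nsmul_eq_mul] at h2
  have h3 := hm.trans h2
  have e : (D ^ 2) ^ r = D ^ (r + r) := by rw [← pow_mul]; congr 1; ring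
  rw [e]
  push_cast at h3
  nlinarith

end Paths

section AKN

open Classical

variable {V : Type*} [Fintype V] (G : SimpleGraph V)

lemma cl_eq_of_agree (x y : G.edgeSet → Bool) (u : V)
    (h : ∀ e : G.edgeSet, (∃ a ∈ (e : Sym2 V), a ∈ cl G x u) → y e = x e) :
    cl G y u = cl G x u := by
  ext w
  rw [mem_cl]
  constructor
  · intro hw
    rw [SimpleGraph.reachable_iff_reflTransGen] at hw
    induction hw with
    | refl => exact self_mem_cl G x u
    | @tail b c _ hbc ih =>
      rw [perco_adj] at hbc
      obtain ⟨h1, h2⟩ := hbc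
      rw [h _ ⟨b, by simp, ih⟩] at h2
      rw [mem_cl] at ih ⊢
      exact ih.trans (SimpleGraph.Adj.reachable ((perco_adj G x b c).2 ⟨h1, h2⟩))
  · intro hw
    rw [mem_cl, SimpleGraph.reachable_iff_reflTransGen] at hw
    have key : (percoGraph G y).Reachable u w ∧ w ∈ cl G x u := by
      induction hw with
      | refl => exact ⟨SimpleGraph.Reachable.refl _, self_mem_cl G x u⟩
      | @tail b c _ hbc ih =>
        obtain ⟨i1, i2⟩ := ih
        have hbc' := hbc
        rw [perco_adj] at hbc
        obtain ⟨h1, h2⟩ := hbc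
        rw [← h _ ⟨b, by simp, i2⟩] at h2
        refine ⟨i1.trans (SimpleGraph.Adj.reachable ((perco_adj G y b c).2 ⟨h1, h2⟩)), ?_⟩
        rw [mem_cl] at i2 ⊢
        exact i2.trans (SimpleGraph.Adj.reachable hbc')
    exact key.1

/-- edges touching one of two clusters -/
def TT (u v : V) (x : G.edgeSet → Bool) : Finset G.edgeSet :=
  Finset.univ.filter fun e => ∃ a ∈ (e : Sym2 V), a ∈ cl G x u ∨ a ∈ cl G x v

lemma mem_TT {u v : V} {x : G.edgeSet → Bool} {e : G.edgeSet} :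
    e ∈ TT G u v x ↔ ∃ a ∈ (e : Sym2 V), a ∈ cl G x u ∨ a ∈ cl G x v := by simp [TT]

lemma TT_local (u v : V) (x y : G.edgeSet → Bool) (h : ∀ e ∈ TT G u v x, y e = x e) :
    TT G u v y = TT G u v x := by
  have h1 : cl G y u = cl G x u := by
    apply cl_eq_of_agree
    rintro e ⟨a, ha, hc⟩
    exact h e ((mem_TT G).2 ⟨a, ha, Or.inl hc⟩)
  have h2 : cl G y v = cl G x v := by
    apply cl_eq_of_agree
    rintro e ⟨a, ha, hc⟩
    exact h e ((mem_TT G).2 ⟨a, ha, Or.inr hc⟩)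
  unfold TT
  rw [h1, h2]

lemma TT_inter_closed {x : G.edgeSet → Bool} {u v : V} (huv : v ∉ cl G x u) (e : G.edgeSet)
    (he : e ∈ TT G u u x ∩ TT G v v x) : x e = false := by
  rw [Finset.mem_inter, mem_TT, mem_TT] at he
  obtain ⟨⟨a, ha, ha'⟩, ⟨c, hc, hc'⟩⟩ := he
  rw [or_self] at ha' hc'
  have hdis := cl_disj G huv
  have hne : a ≠ c := by
    rintro rfl
    exact Finset.disjoint_left.1 hdis ha' hc'
  by_contra hx
  rw [Bool.not_eq_false] at hx
  have hE : (e : Sym2 V) = s(a, c) := ((Sym2.mem_and_mem_iff hne).1 ⟨ha, hc⟩)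
  obtain ⟨t, ht⟩ := e
  simp only at hE
  subst hE
  have : (percoGraph G x).Reachable a c := SimpleGraph.Adj.reachable ((perco_adj G x a c).2 ⟨ht, hx⟩)
  rw [mem_cl] at ha'
  exact Finset.disjoint_left.1 hdis ((mem_cl G).2 (ha'.trans this)) hc'

lemma Ysum_union (p : ℝ) {x : G.edgeSet → Bool} {u v : V} (huv : v ∉ cl G x u) :
    p * (TT G u u x ∩ TT G v v x).card =
      Ysum p (TT G u v) x - Ysum p (TT G u u) x - Ysum p (TT G v v) x := by
  have hU : TT G u v x = TT G u u x ∪ TT G v v x := by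
    ext e
    rw [Finset.mem_union, mem_TT, mem_TT, mem_TT]
    simp only [or_self]
    constructor
    · rintro ⟨a, h, h1 | h1⟩
      · exact Or.inl ⟨a, h, h1⟩
      · exact Or.inr ⟨a, h, h1⟩
    · rintro (⟨a, h, h1⟩ | ⟨a, h, h1⟩)
      · exact ⟨a, h, Or.inl h1⟩
      · exact ⟨a, h, Or.inr h1⟩
  have hs := Finset.sum_union_inter (s₁ := TT G u u x) (s₂ := TT G v v x)
    (f := fun e => ((if x e then (1:ℝ) else 0) - p))
  rw [← hU] at hs
  have hi : ∑ e ∈ TT G u u x ∩ TT G v v x, ((if x e then (1:ℝ) else 0) - p) =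
      ∑ e ∈ TT G u u x ∩ TT G v v x, (-p) := by
    apply Finset.sum_congr rfl
    intro e he
    simp [TT_inter_closed G huv e he]
  rw [hi, Finset.sum_const, nsmul_eq_mul] at hs
  unfold Ysum
  linarith

/-- all sums are small -/
def Good (p t : ℝ) (x : G.edgeSet → Bool) : Prop := ∀ u v, |Ysum p (TT G u v) x| < t

lemma sym2_rep (e : G.edgeSet) : ∃ u v, (e : Sym2 V) = s(u, v) := by
  obtain ⟨⟨a, c⟩, h⟩ := e
  exact ⟨a, c, rfl⟩

lemma bigN_good {p t k : ℝ} (hp : 0 < p) (hk : 0 < k) (x : G.edgeSet → Bool) (hg : Good G p t x) :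
    bigN G k x * k ^ 2 * p ≤ (Fintype.card V : ℝ) ^ 2 * (3 * t) := by
  have h1 : ∀ e : G.edgeSet, (if x e then 0 else if k ≤ grd (LR G) e x then (1:ℝ) else 0) * k ^ 2 ≤
      ∑ u, ∑ v, if v ∉ cl G x u then (if e ∈ TT G u u x ∩ TT G v v x then (1:ℝ) else 0) else 0 := by
    intro e
    have hnn : 0 ≤ ∑ u, ∑ v, if v ∉ cl G x u then
        (if e ∈ TT G u u x ∩ TT G v v x then (1:ℝ) else 0) else 0 := by
      apply Finset.sum_nonneg; intro u _
      apply Finset.sum_nonneg; intro v _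
      split_ifs <;> norm_num
    by_cases hx : x e = true
    · rw [if_pos hx, zero_mul]; exact hnn
    by_cases hgk : k ≤ grd (LR G) e x
    swap
    · rw [if_neg hx, if_neg hgk, zero_mul]; exact hnn
    rw [if_neg hx, if_pos hgk, one_mul]
    obtain ⟨a, c, hac⟩ := sym2_rep G e
    obtain ⟨g1, _, g3, g4⟩ := isF_spec G hk x e (by simpa using hx) hgk a c hac
    calc k ^ 2 = k * k := sq k
      _ ≤ (cl G x a).card * (cl G x c).card := by gcongr
      _ = ∑ u ∈ cl G x a, ∑ v ∈ cl G x c, (1:ℝ) := by simp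
      _ ≤ ∑ u ∈ cl G x a, ∑ v ∈ cl G x c, (if v ∉ cl G x u then
        (if e ∈ TT G u u x ∩ TT G v v x then (1:ℝ) else 0) else 0) := by
          apply Finset.sum_le_sum; intro u hu
          apply Finset.sum_le_sum; intro v hv
          have e1 := cl_eq G hu
          have e2 := cl_eq G hv
          rw [if_pos, if_pos]
          · rw [Finset.mem_inter, mem_TT, mem_TT, e1, e2]
            refine ⟨⟨a, ?_, Or.inl (self_mem_cl G x a)⟩, ⟨c, ?_, Or.inl (self_mem_cl G x c)⟩⟩
            · rw [hac]; simp
            · rw [hac]; simp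
          · rw [e1]
            exact Finset.disjoint_right.1 (cl_disj G g1) hv
      _ ≤ ∑ u, ∑ v ∈ cl G x c, (if v ∉ cl G x u then
        (if e ∈ TT G u u x ∩ TT G v v x then (1:ℝ) else 0) else 0) := by
          apply Finset.sum_le_sum_of_subset_of_nonneg (Finset.subset_univ _)
          intro u _ _
          apply Finset.sum_nonneg; intro v _
          split_ifs <;> norm_num
      _ ≤ _ := by
          apply Finset.sum_le_sum; intro u _
          apply Finset.sum_le_sum_of_subset_of_nonneg (Finset.subset_univ _)
          intro v _ _
          split_ifs <;> norm_num
  have h2 : bigN G k x * k ^ 2 ≤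
      ∑ u, ∑ v, if v ∉ cl G x u then ((TT G u u x ∩ TT G v v x).card : ℝ) else 0 := by
    unfold bigN
    rw [Finset.sum_mul]
    refine (Finset.sum_le_sum fun e _ => h1 e).trans (le_of_eq ?_)
    rw [Finset.sum_comm]
    apply Finset.sum_congr rfl; intro u _
    rw [Finset.sum_comm]
    apply Finset.sum_congr rfl; intro v _
    by_cases h : v ∉ cl G x u
    · simp only [if_pos h]
      rw [Finset.sum_ite_mem]; simp
    · simp only [if_neg h]; simp
  have h3 : (∑ u, ∑ v, if v ∉ cl G x u then ((TT G u u x ∩ TT G v v x).card : ℝ) else 0) * p ≤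
      ∑ u : V, ∑ v : V, 3 * t := by
    rw [Finset.sum_mul]
    apply Finset.sum_le_sum; intro u _
    rw [Finset.sum_mul]
    apply Finset.sum_le_sum; intro v _
    have a1 := abs_lt.1 (hg u v)
    have a2 := abs_lt.1 (hg u u)
    have a3 := abs_lt.1 (hg v v)
    by_cases h : v ∉ cl G x u
    · rw [if_pos h, mul_comm, Ysum_union G p h]; linarith
    · rw [if_neg h]; linarith
  have h4 : ∑ u : V, ∑ v : V, 3 * t = (Fintype.card V : ℝ) ^ 2 * (3 * t) := by
    simp [Finset.sum_const]; ring
  rw [← h4]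
  refine le_trans ?_ h3
  gcongr

lemma bigN_le {d : ℕ} (hd : DegreeLE G d) (k : ℝ) (x : G.edgeSet → Bool) :
    bigN G k x ≤ d * Fintype.card V := by
  unfold bigN
  calc _ ≤ ∑ e : G.edgeSet, (1:ℝ) := by
        apply Finset.sum_le_sum; intro e _
        split_ifs <;> norm_num
    _ = Fintype.card G.edgeSet := by simp
    _ ≤ _ := by exact_mod_cast card_edges_le G hd

lemma bigN_nonneg (k : ℝ) (x : G.edgeSet → Bool) : 0 ≤ bigN G k x := by
  unfold bigN
  apply Finset.sum_nonneg; intro e _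
  split_ifs <;> norm_num

lemma bigN_zero (k : ℝ) (x : G.edgeSet → Bool) (h : ¬ isF G k x) : bigN G k x = 0 := by
  unfold bigN
  apply Finset.sum_eq_zero; intro e _
  by_cases hx : x e = true
  · rw [if_pos hx]
  · rw [if_neg hx, if_neg]
    intro hk
    exact h ⟨e, by simpa using hx, hk⟩

lemma low_p {d : ℕ} (hd : DegreeLE G d) {p t k : ℝ} (h0 : 0 ≤ p) (hp : 4 * d * p ≤ 1) (hk : 1 < k)
    (hkt : 4 * t ≤ k)
    (x : G.edgeSet → Bool) (hg : Good G p t x) : ¬ isF G k x := by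
  rintro ⟨e, he, hgk⟩
  obtain ⟨u, v, huv⟩ := sym2_rep G e
  obtain ⟨_, _, g3, _⟩ := isF_spec G (by linarith) x e he hgk u v huv
  set O := (TT G u u x).filter fun e => x e = true with hO
  have hcl : 1 < (cl G x u).card := by
    have : (1:ℝ) < (cl G x u).card := by linarith
    exact_mod_cast this
  have inc : ∀ a ∈ cl G x u, ∃ f ∈ O, a ∈ (f : Sym2 V) := by
    intro a ha
    have hcla := cl_eq G ha
    rw [← hcla] at hcl
    obtain ⟨c, hc, hca⟩ := Finset.exists_mem_ne hcl a
    rw [mem_cl] at hc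
    obtain ⟨w, hw⟩ : ∃ w, (percoGraph G x).Adj a w := by
      obtain ⟨W⟩ := hc
      cases W with
      | nil => exact absurd rfl hca
      | cons h _ => exact ⟨_, h⟩
    rw [perco_adj] at hw
    obtain ⟨h1, h2⟩ := hw
    refine ⟨⟨s(a, w), h1⟩, ?_, by simp⟩
    rw [hO, Finset.mem_filter, mem_TT]
    exact ⟨⟨a, by simp, Or.inl ha⟩, h2⟩
  have hO2 : (cl G x u).card ≤ 2 * O.card := by
    have hsub : cl G x u ⊆ O.biUnion fun f => Finset.univ.filter fun a => a ∈ (f : Sym2 V) := by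
      intro a ha
      obtain ⟨f, hf, haf⟩ := inc a ha
      simp only [Finset.mem_biUnion, Finset.mem_filter, Finset.mem_univ, true_and]
      exact ⟨f, hf, haf⟩
    refine (Finset.card_le_card hsub).trans (Finset.card_biUnion_le.trans ?_)
    calc _ ≤ ∑ f ∈ O, 2 := by
          apply Finset.sum_le_sum
          intro f _
          obtain ⟨a, c, hac⟩ := sym2_rep G f
          rw [hac]
          refine le_trans (Finset.card_le_card (t := {a, c}) ?_) Finset.card_le_two
          intro v hv
          simpa using hv
      _ = _ := by simp [mul_comm]
  have hT : (TT G u u x).card ≤ d * (cl G x u).card := by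
    have hsub : TT G u u x ⊆
        (cl G x u).biUnion fun a => Finset.univ.filter fun e : G.edgeSet => a ∈ (e : Sym2 V) := by
      intro f hf
      rw [mem_TT] at hf
      obtain ⟨a, h1, h2⟩ := hf
      rw [or_self] at h2
      simp only [Finset.mem_biUnion, Finset.mem_filter, Finset.mem_univ, true_and]
      exact ⟨a, h2, h1⟩
    refine (Finset.card_le_card hsub).trans (Finset.card_biUnion_le.trans ?_)
    calc _ ≤ ∑ a ∈ cl G x u, d := Finset.sum_le_sum fun a _ => incident_card G hd a
      _ = _ := by simp [mul_comm]
  have hY : Ysum p (TT G u u) x = O.card - (TT G u u x).card * p := by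
    unfold Ysum
    rw [Finset.sum_sub_distrib, Finset.sum_const, nsmul_eq_mul, ← Finset.sum_filter]
    simp [hO]
  have a2 := (abs_lt.1 (hg u u)).2
  have hO2' : ((cl G x u).card : ℝ) ≤ 2 * O.card := by exact_mod_cast hO2
  have hT' : ((TT G u u x).card : ℝ) ≤ d * (cl G x u).card := by exact_mod_cast hT
  have h5 : ((TT G u u x).card : ℝ) * p ≤ (cl G x u).card / 4 := by
    calc ((TT G u u x).card : ℝ) * p ≤ d * (cl G x u).card * p := by gcongr
      _ = (4 * d * p) * ((cl G x u).card / 4) := by ring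
      _ ≤ 1 * ((cl G x u).card / 4) := by gcongr
      _ = _ := one_mul _
  linarith

lemma prob_bad {d : ℕ} (hd : DegreeLE G d) {p : ℝ} (h0 : 0 ≤ p) (h1 : p ≤ 1) (t : ℝ)
    (hn : 1 ≤ Fintype.card V) :
    Ex p (fun x => if Good G p t x then 0 else 1) ≤
      2 * (Fintype.card V : ℝ) ^ 2 * Real.exp (d - t / Real.sqrt (Fintype.card V)) := by
  set n : ℝ := (Fintype.card V : ℝ) with hnn
  have hn1 : 1 ≤ n := by rw [hnn]; exact_mod_cast hn
  have hs1 : 1 ≤ Real.sqrt n := Real.one_le_sqrt.2 hn1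
  set s : ℝ := 1 / Real.sqrt n with hs
  have hs0 : 0 < s := by positivity
  have hsle : s ≤ 1 := by rw [hs, div_le_one (by positivity)]; exact hs1
  have hsq : s ^ 2 * Fintype.card G.edgeSet ≤ d := by
    have hE : (Fintype.card G.edgeSet : ℝ) ≤ d * n := by
      rw [hnn]; exact_mod_cast card_edges_le G hd
    rw [hs, div_pow, Real.sq_sqrt (by linarith), one_pow, one_div, inv_mul_le_iff₀ (by linarith)]
    linarith
  have hst : t / Real.sqrt n = s * t := by rw [hs]; ring
  have b1 : ∀ u v, Ex p (fun x => if t ≤ Ysum p (TT G u v) x then 1 else 0) ≤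
      Real.exp (d - t / Real.sqrt n) := by
    intro u v
    refine (tail_bound h0 h1 (TT G u v) (TT_local G u v) s (s * t) (by rw [abs_of_pos hs0]; exact hsle)
      (fun x => t ≤ Ysum p (TT G u v) x) (fun x hx => by gcongr)).trans ?_
    rw [hst]
    gcongr
  have b2 : ∀ u v, Ex p (fun x => if t ≤ - Ysum p (TT G u v) x then 1 else 0) ≤
      Real.exp (d - t / Real.sqrt n) := by
    intro u v
    refine (tail_bound h0 h1 (TT G u v) (TT_local G u v) (-s) (s * t)
      (by rw [abs_neg, abs_of_pos hs0]; exact hsle)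
      (fun x => t ≤ - Ysum p (TT G u v) x) (fun x hx => by rw [neg_mul_comm]; gcongr)).trans ?_
    rw [hst, neg_sq]
    gcongr
  have hpt : ∀ x, (if Good G p t x then (0:ℝ) else 1) ≤ ∑ u, ∑ v,
      ((if t ≤ Ysum p (TT G u v) x then 1 else 0) + (if t ≤ - Ysum p (TT G u v) x then 1 else 0)) := by
    intro x
    have hnn : ∀ u v, (0:ℝ) ≤ ((if t ≤ Ysum p (TT G u v) x then 1 else 0) +
        (if t ≤ - Ysum p (TT G u v) x then 1 else 0)) := by
      intro u v; split_ifs <;> norm_num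
    split_ifs with hG
    · exact Finset.sum_nonneg fun u _ => Finset.sum_nonneg fun v _ => hnn u v
    · unfold Good at hG
      push Not at hG
      obtain ⟨u, v, huv⟩ := hG
      refine le_trans ?_ (Finset.single_le_sum (fun u _ => Finset.sum_nonneg fun v _ => hnn u v)
        (Finset.mem_univ u))
      refine le_trans ?_ (Finset.single_le_sum (fun v _ => hnn u v) (Finset.mem_univ v))
      rcases le_abs.1 huv with h | h
      · rw [if_pos h]; split_ifs <;> norm_num
      · rw [if_pos h]; split_ifs <;> norm_num
  refine (Ex_mono h0 h1 hpt).trans ?_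
  rw [Ex_sum]
  calc _ ≤ ∑ u : V, ∑ v : V, 2 * Real.exp (d - t / Real.sqrt n) := by
        apply Finset.sum_le_sum; intro u _
        rw [Ex_sum]
        apply Finset.sum_le_sum; intro v _
        rw [Ex_add]
        have := b1 u v
        have := b2 u v
        linarith
    _ = _ := by simp [Finset.sum_const, hnn]; ring

lemma closed_of_isF {b : ℝ} (hb : 0 < b) (hC : CheegerGT G b) {k : ℝ} (hk : 0 < k)
    (x : G.edgeSet → Bool) (hF : isF G k x) :
    b * k ≤ (Finset.univ.filter fun e => x e = false).card := by
  obtain ⟨e, he, hgk⟩ := hF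
  obtain ⟨u, v, huv⟩ := sym2_rep G e
  obtain ⟨g1, _, g3, g4⟩ := isF_spec G hk x e he hgk u v huv
  have hdis := cl_disj G g1
  have hsum : (cl G x u).card + (cl G x v).card ≤ Fintype.card V := by
    rw [← Finset.card_union_of_disjoint hdis]; exact Finset.card_le_univ _
  obtain ⟨w, hw1, hw2⟩ : ∃ w, k ≤ (cl G x w).card ∧ 2 * (cl G x w).card ≤ Fintype.card V := by
    rcases le_total (cl G x u).card (cl G x v).card with h | h
    · exact ⟨u, g3, by omega⟩
    · exact ⟨v, g4, by omega⟩
  have hch := hC (cl G x w : Set V)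
    (by rw [Set.ncard_coe_finset]; exact Finset.card_pos.2 ⟨w, self_mem_cl G x w⟩)
    (by rw [Set.ncard_coe_finset, Nat.card_eq_fintype_card]; exact hw2)
  rw [Set.ncard_coe_finset] at hch
  have hB : edgeBoundaryCard G (cl G x w : Set V) ≤ (Finset.univ.filter fun e => x e = false).card := by
    unfold edgeBoundaryCard
    rw [Set.ncard_eq_toFinset_card']
    rw [← Finset.card_image_of_injective (Finset.univ.filter fun e => x e = false)
      Subtype.val_injective]
    apply Finset.card_le_card_of_injOn (fun q => s(q.1, q.2))
    · rintro ⟨a, c⟩ h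
      simp only [Finset.mem_coe, Set.mem_toFinset, Set.mem_ofPred_eq] at h
      obtain ⟨h1, h2, h3⟩ := h
      simp only [Finset.coe_image, Set.mem_image, Finset.mem_coe, Finset.mem_filter,
        Finset.mem_univ, true_and]
      refine ⟨⟨s(a, c), h1⟩, ?_, rfl⟩
      by_contra hx
      rw [Bool.not_eq_false] at hx
      apply h3
      rw [mem_cl] at h2 ⊢
      exact h2.trans (SimpleGraph.Adj.reachable ((perco_adj G x a c).2 ⟨h1, hx⟩))
    · rintro ⟨a, c⟩ h ⟨a', c'⟩ h' heq
      simp only [Finset.mem_coe, Set.mem_toFinset, Set.mem_ofPred_eq] at h h'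
      simp only [Sym2.eq_iff] at heq
      rcases heq with ⟨e1, e2⟩ | ⟨e1, e2⟩
      · rw [e1, e2]
      · subst e1 e2
        exact absurd h.2.1 h'.2.2
  have hB' : (edgeBoundaryCard G (cl G x w : Set V) : ℝ) ≤
    (Finset.univ.filter fun e => x e = false).card := by exact_mod_cast hB
  have : b * k ≤ b * (cl G x w).card := by gcongr
  linarith

lemma prob_F_high {b : ℝ} (hb : 0 < b) (hC : CheegerGT G b) {d : ℕ} (hd : DegreeLE G d)
    {k p : ℝ} (hk : 0 < k) (h0 : 0 ≤ p) (h1 : p < 1) (hn : 1 ≤ Fintype.card V)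
    (m : ℕ) (hm : (m : ℝ) ≤ b * k) (hq : (1 - p) * (Fintype.card V : ℝ) ^ 2 ≤ 1) :
    Ex p (fun x => if isF G k x then 1 else 0) ≤ Real.sqrt (1 - p) ^ m * Real.exp d := by
  set s := Real.sqrt (1 - p) with hs
  have hs0 : 0 < s := Real.sqrt_pos.2 (by linarith)
  have hs1 : s ≤ 1 := Real.sqrt_le_one.2 (by linarith)
  have hss : s ^ 2 = 1 - p := Real.sq_sqrt (by linarith)
  have hn' : (1:ℝ) ≤ Fintype.card V := by exact_mod_cast hn
  have hsn : s * Fintype.card V ≤ 1 := by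
    by_contra h
    push Not at h
    have : 1 < (s * Fintype.card V) ^ 2 := one_lt_pow₀ h (by norm_num)
    rw [mul_pow, hss] at this
    linarith
  have hmk := markov h0 h1.le (isF G k) (fun x => ∏ e, (if x e then 1 else 1 / s))
    (fun x => Finset.prod_nonneg fun e _ => by split_ifs <;> positivity) ((1 / s) ^ m) (by positivity)
    (by
      intro x hx
      have hc := hm.trans (closed_of_isF G hb hC hk x hx)
      have hc' : m ≤ (Finset.univ.filter fun e => x e = false).card := by exact_mod_cast hc
      have : ∏ e, (if x e then 1 else 1 / s) =
          (1 / s) ^ (Finset.univ.filter fun e => x e = false).card := by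
        rw [← Finset.prod_const, Finset.prod_filter]
        apply Finset.prod_congr rfl
        intro e _
        cases x e <;> simp
      rw [this]
      apply pow_le_pow_right₀ _ hc'
      rw [le_div_iff₀ hs0]; linarith)
  refine hmk.trans ?_
  rw [Ex_prod p (fun _ c => if c then 1 else 1 / s)]
  have e1 : p * (1:ℝ) + (1 - p) * (1 / s) = p + s := by
    rw [← hss]; field_simp
  simp only [if_true, Bool.false_eq_true, if_false, e1, Finset.prod_const, Finset.card_univ]
  rw [one_div, inv_pow, div_inv_eq_mul, mul_comm]
  gcongr
  calc (p + s) ^ Fintype.card G.edgeSet ≤ (Real.exp s) ^ Fintype.card G.edgeSet := by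
        gcongr
        have := Real.add_one_le_exp s
        linarith
    _ = Real.exp (Fintype.card G.edgeSet * s) := by rw [← Real.exp_nat_mul]
    _ ≤ Real.exp d := by
        gcongr
        have hE : (Fintype.card G.edgeSet : ℝ) ≤ d * Fintype.card V := by
          exact_mod_cast card_edges_le G hd
        calc (Fintype.card G.edgeSet : ℝ) * s ≤ d * Fintype.card V * s := by gcongr
          _ = d * (s * Fintype.card V) := by ring
          _ ≤ d * 1 := by gcongr
          _ = d := mul_one _

end AKN

section Final

open Classical

variable {V : Type*} [Fintype V] (G : SimpleGraph V)

lemma main_large {b : ℝ} (hb : 0 < b) (hC : CheegerGT G b) {d : ℕ} (hd : DegreeLE G d) (hd0 : 0 < d)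
    (hbd : b ≤ d) (r : ℕ) (hn : 2 ≤ Fintype.card V) (k t : ℝ)
    (hk : k = (Fintype.card V : ℝ) / (1 + b / d) ^ r)
    (ht : t = (2 * d + 10) * Real.sqrt (Fintype.card V) * Real.log (Fintype.card V))
    (hk1 : 1 < k) (hkt : 4 * t ≤ k) (hbk : (2 * d + 6 : ℝ) ≤ b * k) {p : ℝ} (h0 : 0 < p) (h1 : p < 1) :
    varC p (LR G) ≤ (k + 3 * (d * Real.exp d) +
      96 * d * (r * ((1 + b / d) ^ 4 * (4 * d ^ 2) ^ 2) ^ r) * t) * Sinf G p := by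
  set n : ℝ := (Fintype.card V : ℝ) with hnn
  set τ : ℝ := 1 + b / d with hτ
  have hdr : (1:ℝ) ≤ d := by exact_mod_cast hd0
  have hn2 : 2 ≤ n := by rw [hnn]; exact_mod_cast hn
  have hS := Sinf_nonneg G h0.le h1.le
  have hlog : 0 < Real.log n := Real.log_pos (by linarith)
  have ht0 : 0 < t := by rw [ht]; positivity
  have hτ0 : 0 < τ := by positivity
  have hk0 : 0 < k := by linarith
  have hSq := Sinf_ge G hb hC hn hd h0.le h1.le
  have hv := var_bound G h0.le h1.le hk0.le
  rw [← hnn] at hv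
  have hmain0 : 0 ≤ 96 * d * (r * (τ ^ 4 * (4 * d ^ 2) ^ 2) ^ r) * t := by positivity
  have hE0 : 0 < d * Real.exp d := by positivity
  suffices hsuff : n ^ 2 * Ex p (bigN G k) ≤ (3 * (d * Real.exp d) +
      96 * d * (r * (τ ^ 4 * (4 * d ^ 2) ^ 2) ^ r) * t) * Sinf G p by
    calc varC p (LR G) ≤ _ := hv
      _ ≤ k * Sinf G p + (3 * (d * Real.exp d) +
        96 * d * (r * (τ ^ 4 * (4 * d ^ 2) ^ 2) ^ r) * t) * Sinf G p := by linarith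
      _ = _ := by ring
  by_cases hq : (1 - p) * n ^ 2 ≤ 1
  · have hP := prob_F_high G hb hC hd hk0 h0.le h1 (by omega) (2 * d + 6) (by push_cast; exact hbk)
      (by rw [← hnn]; exact hq)
    have hB : Ex p (bigN G k) ≤ d * n * Ex p (fun x => if isF G k x then 1 else 0) := by
      rw [← Ex_mul]
      apply Ex_mono h0.le h1.le
      intro x
      split_ifs with h
      · rw [mul_one]; exact bigN_le G hd k x
      · rw [bigN_zero G k x h]; simp
    have hs : Real.sqrt (1 - p) ^ (2 * d + 6) = (1 - p) ^ d * (1 - p) ^ 3 := by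
      rw [show 2 * d + 6 = 2 * (d + 3) by ring, pow_mul, Real.sq_sqrt (by linarith), pow_add]
    rw [hs] at hP
    have hq3 : n ^ 3 * (1 - p) ^ 3 ≤ 1 := by
      rw [← mul_pow]
      apply pow_le_one₀
      · apply mul_nonneg <;> linarith
      · nlinarith
    have hqd : 0 ≤ (1 - p) ^ d := pow_nonneg (by linarith) _
    calc n ^ 2 * Ex p (bigN G k) ≤ n ^ 2 * (d * n * ((1 - p) ^ d * (1 - p) ^ 3 * Real.exp d)) := by
          have := hB.trans (mul_le_mul_of_nonneg_left hP (by positivity))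
          gcongr
      _ = (n ^ 3 * (1 - p) ^ 3) * (d * Real.exp d * (1 - p) ^ d) := by ring
      _ ≤ 1 * (d * Real.exp d * Sinf G p) := by gcongr
      _ ≤ _ := by
        rw [one_mul]
        apply mul_le_mul_of_nonneg_right _ hS
        linarith
  · push Not at hq
    have hSn : 1 ≤ Sinf G p * n ^ (2 * d) := by
      calc 1 ≤ ((1 - p) * n ^ 2) ^ d := one_le_pow₀ hq.le
        _ = (1 - p) ^ d * n ^ (2 * d) := by rw [mul_pow, pow_mul]
        _ ≤ _ := by gcongr
    have hbad := prob_bad G hd h0.le h1.le t (by omega)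
    rw [← hnn] at hbad
    have hexp : Real.exp (d - t / Real.sqrt n) = Real.exp d / n ^ (2 * d + 10) := by
      have hsn : Real.sqrt n ≠ 0 := (Real.sqrt_pos.2 (by linarith)).ne'
      have : t / Real.sqrt n = ((2 * d + 10 : ℕ) : ℝ) * Real.log n := by
        rw [ht]; push_cast; field_simp
      rw [Real.exp_sub, this, Real.exp_nat_mul, Real.exp_log (by linarith)]
    rw [hexp] at hbad
    have hbadS : n ^ 2 * (d * n * Ex p (fun x => if Good G p t x then 0 else 1)) ≤
        3 * (d * Real.exp d) * Sinf G p := by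
      calc n ^ 2 * (d * n * Ex p (fun x => if Good G p t x then 0 else 1))
          ≤ n ^ 2 * (d * n * (2 * n ^ 2 * (Real.exp d / n ^ (2 * d + 10)))) := by gcongr
        _ = 2 * (d * Real.exp d) * (1 / n ^ 5) * (1 / n ^ (2 * d)) := by
            rw [pow_add]; field_simp
        _ ≤ 3 * (d * Real.exp d) * 1 * Sinf G p := by
            gcongr
            · norm_num
            · rw [div_le_one (by positivity)]
              exact one_le_pow₀ (by linarith)
            · rw [div_le_iff₀ (by positivity)]; exact hSn
        _ = _ := by ring
    by_cases hp : 4 * d * p ≤ 1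
    · have hB : Ex p (bigN G k) ≤ d * n * Ex p (fun x => if Good G p t x then 0 else 1) := by
        rw [← Ex_mul]
        apply Ex_mono h0.le h1.le
        intro x
        split_ifs with h
        · rw [bigN_zero G k x (low_p G hd h0.le hp hk1 hkt x h)]; simp
        · rw [mul_one]; exact bigN_le G hd k x
      calc _ ≤ n ^ 2 * (d * n * Ex p (fun x => if Good G p t x then 0 else 1)) := by gcongr
        _ ≤ _ := hbadS
        _ ≤ _ := by
          apply mul_le_mul_of_nonneg_right _ hS
          linarith
    · push Not at hp
      have hB : Ex p (bigN G k) ≤ (12 * d * t * n ^ 2 / k ^ 2) *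
          Ex p (fun x => if isF G k x then 1 else 0) +
          d * n * Ex p (fun x => if Good G p t x then 0 else 1) := by
        rw [← Ex_mul, ← Ex_mul, ← Ex_add]
        apply Ex_mono h0.le h1.le
        intro x
        have hc0 : 0 ≤ 12 * d * t * n ^ 2 / k ^ 2 := by positivity
        by_cases hF : isF G k x
        · by_cases hG : Good G p t x
          · rw [if_pos hF, if_pos hG, mul_one, mul_zero, add_zero, le_div_iff₀ (by positivity)]
            have hg := bigN_good G h0 hk0 x hG
            rw [← hnn] at hg
            have hN := bigN_nonneg G k x
            calc bigN G k x * k ^ 2 = bigN G k x * k ^ 2 * 1 := by ring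
              _ ≤ bigN G k x * k ^ 2 * (4 * d * p) := by gcongr
              _ = 4 * d * (bigN G k x * k ^ 2 * p) := by ring
              _ ≤ 4 * d * (n ^ 2 * (3 * t)) := by gcongr
              _ = _ := by ring
          · rw [if_pos hF, if_neg hG]
            have := bigN_le G hd k x
            rw [← hnn] at this
            linarith
        · rw [bigN_zero G k x hF, if_neg hF]
          split_ifs <;> simp <;> positivity
      have hPF := prob_F G hb hC hd hd0 hbd r (by omega) k hk h0 h1.le (D := 4 * d ^ 2)
        (by nlinarith) (by rw [div_le_iff₀ h0]; nlinarith)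
      have hnk : n ^ 2 = k ^ 2 * (τ ^ r) ^ 2 := by
        rw [hk]; field_simp
      have hA : n ^ 2 * ((12 * d * t * n ^ 2 / k ^ 2) * Ex p (fun x => if isF G k x then 1 else 0)) ≤
          96 * d * (r * (τ ^ 4 * (4 * d ^ 2) ^ 2) ^ r) * t * Sinf G p := by
        calc _ = 12 * d * t * (τ ^ r) ^ 4 * (Ex p (fun x => if isF G k x then 1 else 0) * k ^ 2) := by
              rw [hnk]; field_simp
          _ ≤ 12 * d * t * (τ ^ r) ^ 4 * (8 * r * ((4 * d ^ 2) ^ 2) ^ r * Sinf G p) := by gcongr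
          _ = _ := by rw [mul_pow (τ ^ 4) _ r, pow_right_comm τ 4 r]; ring
      calc _ ≤ n ^ 2 * ((12 * d * t * n ^ 2 / k ^ 2) *
            Ex p (fun x => if isF G k x then 1 else 0) +
            d * n * Ex p (fun x => if Good G p t x then 0 else 1)) := by gcongr
        _ = n ^ 2 * ((12 * d * t * n ^ 2 / k ^ 2) * Ex p (fun x => if isF G k x then 1 else 0)) +
            n ^ 2 * (d * n * Ex p (fun x => if Good G p t x then 0 else 1)) := by ring
        _ ≤ _ := by linarith

lemma asym {b : ℝ} (hb : 0 < b) {d : ℕ} (hd0 : 0 < d) (hbd : b ≤ d) :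
    ∃ C : ℝ, 0 ≤ C ∧ ∃ N0 : ℕ, 2 ≤ N0 ∧ ∀ n : ℕ, N0 ≤ n → ∃ r : ℕ,
      1 < (n:ℝ) / (1 + b / d) ^ r ∧
      4 * ((2 * d + 10) * Real.sqrt n * Real.log n) ≤ (n:ℝ) / (1 + b / d) ^ r ∧
      (2 * d + 6 : ℝ) ≤ b * ((n:ℝ) / (1 + b / d) ^ r) ∧
      (n:ℝ) / (1 + b / d) ^ r + 3 * (d * Real.exp d) +
      96 * d * (r * ((1 + b / d) ^ 4 * (4 * d ^ 2) ^ 2) ^ r) *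
        ((2 * d + 10) * Real.sqrt n * Real.log n) ≤ C * (n / Real.log n) := by
  set τ : ℝ := 1 + b / d with hτ
  have hdr : (1:ℝ) ≤ d := by exact_mod_cast hd0
  have hβ0 : 0 < b / d := by positivity
  have hβ1 : b / d ≤ 1 := by rw [div_le_one (by linarith)]; exact hbd
  have hτ1 : 1 ≤ τ := by rw [hτ]; linarith
  have hτ2 : τ ≤ 2 := by rw [hτ]; linarith
  set Q : ℕ := 512 * d ^ 4 with hQ
  have hQ2 : 512 ≤ Q := by rw [hQ]; have : 1 ≤ d ^ 4 := Nat.one_le_pow _ _ hd0; omega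
  have hQr : (512:ℝ) ≤ Q := by exact_mod_cast hQ2
  have hlQ : 0 < Real.log Q := Real.log_pos (by linarith)
  -- eventual facts
  have ev1 : ∀ᶠ y : ℝ in atTop, 16 * (2 * d + 10) * Real.log y ≤ y := by
    have := Real.isLittleO_log_id_atTop.bound (c := 1 / (16 * (2 * d + 10))) (by positivity)
    filter_upwards [this, eventually_ge_atTop (1:ℝ)] with y hy hy1
    simp only [id, Real.norm_eq_abs] at hy
    rw [abs_of_nonneg (Real.log_nonneg hy1), abs_of_nonneg (by linarith), div_mul_eq_mul_div, one_mul,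
      le_div_iff₀ (by positivity)] at hy
    linarith
  have ev2 : ∀ᶠ y : ℝ in atTop, Real.log y ^ 2 ≤ y := by
    have := (Real.isLittleO_pow_log_id_atTop (n := 2)).bound (c := 1) (by positivity)
    filter_upwards [this, eventually_ge_atTop (1:ℝ)] with y hy hy1
    simp only [id, Real.norm_eq_abs] at hy
    rw [abs_of_nonneg (by positivity), abs_of_nonneg (by linarith)] at hy
    linarith
  have ev3 : ∀ᶠ y : ℝ in atTop, (2 * d + 6 : ℝ) / b ≤ y := eventually_ge_atTop _
  obtain ⟨Y, hY⟩ := eventually_atTop.1 (ev1.and (ev2.and (ev3.and (eventually_ge_atTop (2:ℝ)))))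
  refine ⟨4 * Real.log Q / (b / d) + 3 * (d * Real.exp d) + 1536 * d * (2 * d + 10), by positivity,
    max 2 ⌈(max Y 0) ^ 4⌉₊, le_max_left _ _, ?_⟩
  intro n hn
  have hn2 : 2 ≤ n := (le_max_left _ _).trans hn
  have hnr : (2:ℝ) ≤ n := by exact_mod_cast hn2
  have hnY : (max Y 0) ^ 4 ≤ (n:ℝ) := (Nat.le_ceil _).trans (by exact_mod_cast (le_max_right _ _).trans hn)
  set y : ℝ := Real.sqrt (Real.sqrt n) with hy
  have hy0 : 0 ≤ y := Real.sqrt_nonneg _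
  have hy2 : y ^ 2 = Real.sqrt n := Real.sq_sqrt (Real.sqrt_nonneg _)
  have hy4 : y ^ 4 = n := by
    rw [show 4 = 2 * 2 by rfl, pow_mul, hy2, Real.sq_sqrt (by linarith)]
  have hYy : Y ≤ y := by
    refine (le_max_left Y 0).trans ?_
    apply le_of_pow_le_pow_left₀ (n := 4) (by norm_num) hy0
    rw [hy4]; exact hnY
  obtain ⟨e1, e2, e3, e4⟩ := hY y hYy
  have hlogn : Real.log n = 4 * Real.log y := by
    rw [← hy4, Real.log_pow]; norm_num
  have hly : 0 < Real.log y := Real.log_pos (by linarith)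
  set r := Nat.log (Q ^ 4) n with hr
  have hr1 : (Q ^ 4) ^ r ≤ n := Nat.pow_log_le_self _ (by omega)
  have hr2 : n < (Q ^ 4) ^ (r + 1) := Nat.lt_pow_succ_log_self (by
    have : 512 ^ 4 ≤ Q ^ 4 := Nat.pow_le_pow_left hQ2 4
    omega) n
  have hw : (Q:ℝ) ^ r ≤ y := by
    apply le_of_pow_le_pow_left₀ (n := 4) (by norm_num) hy0
    rw [hy4, pow_right_comm]
    exact_mod_cast hr1
  have hτw : τ ^ r ≤ y := by
    refine le_trans ?_ hw
    gcongr
    linarith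
  have hrw : (r:ℝ) * (τ ^ 4 * (4 * d ^ 2) ^ 2) ^ r ≤ y := by
    refine le_trans ?_ hw
    have h2r : (r:ℝ) ≤ 2 ^ r := by exact_mod_cast (Nat.lt_two_pow_self).le
    calc (r:ℝ) * (τ ^ 4 * (4 * d ^ 2) ^ 2) ^ r ≤ 2 ^ r * (2 ^ 4 * (4 * d ^ 2) ^ 2) ^ r := by gcongr
      _ = (Q:ℝ) ^ r := by
        rw [← mul_pow, hQ]; push_cast; congr 1; ring
  have hk3 : y ^ 3 ≤ (n:ℝ) / τ ^ r := by
    rw [le_div_iff₀ (by positivity), ← hy4]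
    calc y ^ 3 * τ ^ r ≤ y ^ 3 * y := by gcongr
      _ = _ := by ring
  have hyy3 : y ≤ y ^ 3 := by
    calc y = y ^ 1 := (pow_one y).symm
      _ ≤ y ^ 3 := pow_le_pow_right₀ (by linarith) (by norm_num)
  refine ⟨r, by linarith, ?_, ?_, ?_⟩
  · refine le_trans ?_ hk3
    rw [← hy2, hlogn]
    calc 4 * ((2 * d + 10) * y ^ 2 * (4 * Real.log y)) = y ^ 2 * (16 * (2 * d + 10) * Real.log y) := by ring
      _ ≤ y ^ 2 * y := by gcongr
      _ = _ := by ring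
  · rw [div_le_iff₀ hb] at e3
    calc (2 * d + 6 : ℝ) ≤ y * b := e3
      _ = b * y := by ring
      _ ≤ _ := by gcongr; linarith
  · have hln : 0 < Real.log n := by rw [hlogn]; positivity
    rw [add_mul _ _ ((n:ℝ) / Real.log n), add_mul _ _ ((n:ℝ) / Real.log n)]
    refine add_le_add (add_le_add ?_ ?_) ?_
    · rw [mul_div_assoc', div_le_div_iff₀ (by positivity) hln]
      have hlogle : Real.log n ≤ 4 * Real.log Q * (r + 1) := by
        have : Real.log n ≤ Real.log (((Q:ℝ) ^ 4) ^ (r + 1)) := by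
          apply Real.log_le_log (by linarith)
          exact_mod_cast hr2.le
        rw [Real.log_pow, Real.log_pow] at this
        push_cast at this
        linarith
      have hbern : 1 + r * (b / d) ≤ τ ^ r := one_add_mul_le_pow (by linarith) r
      have h5 : (r + 1) * (b / d) ≤ τ ^ r := by linarith
      have h6 : Real.log n ≤ 4 * Real.log Q / (b / d) * τ ^ r := by
        calc Real.log n ≤ 4 * Real.log Q * (r + 1) := hlogle
          _ = 4 * Real.log Q / (b / d) * ((r + 1) * (b / d)) := by field_simp
          _ ≤ _ := by gcongr
      calc n * Real.log n ≤ n * (4 * Real.log Q / (b / d) * τ ^ r) := by gcongr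
        _ = _ := by ring
    · apply le_mul_of_one_le_right (by positivity)
      rw [one_le_div hln]
      have := Real.log_le_sub_one_of_pos (show (0:ℝ) < n by linarith)
      linarith
    · rw [mul_div_assoc', le_div_iff₀ hln]
      calc 96 * d * (r * (τ ^ 4 * (4 * d ^ 2) ^ 2) ^ r) * ((2 * d + 10) * Real.sqrt n * Real.log n)
            * Real.log n
          ≤ 96 * d * y * ((2 * d + 10) * Real.sqrt n * Real.log n) * Real.log n := by gcongr
        _ = 1536 * d * (2 * d + 10) * (y ^ 3 * Real.log y ^ 2) := by rw [← hy2, hlogn]; ring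
        _ ≤ 1536 * d * (2 * d + 10) * (y ^ 3 * y) := by gcongr
        _ = _ := by rw [← hy4]; ring

lemma b_lt_d {b : ℝ} (hC : CheegerGT G b) {d : ℕ} (hd : DegreeLE G d) (hn : 2 ≤ Fintype.card V) :
    b < d := by
  obtain ⟨v⟩ : Nonempty V := Fintype.card_pos_iff.1 (by omega)
  have := hC {v} (by simp) (by rw [Nat.card_eq_fintype_card]; simpa using hn)
  simp only [Set.ncard_singleton, Nat.cast_one, mul_one] at this
  have h2 : edgeBoundaryCard G {v} ≤ d := by
    refine le_trans ?_ (hd v)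
    unfold edgeBoundaryCard
    apply Set.ncard_le_ncard_of_injOn (fun q => q.2)
    · rintro ⟨a, c⟩ ⟨h1, h2, h3⟩
      simp only [Set.mem_singleton_iff] at h2
      subst h2
      exact h1
    · rintro ⟨a, c⟩ ⟨h1, h2, h3⟩ ⟨a', c'⟩ ⟨h1', h2', h3'⟩ h
      simp only [Set.mem_singleton_iff] at h2 h2' h
      rw [h2, h2', h]
  have h2' : (edgeBoundaryCard G {v} : ℝ) ≤ d := by exact_mod_cast h2
  linarith

lemma small_case {p : ℝ} (h0 : 0 ≤ p) (h1 : p ≤ 1) (hn : Fintype.card V ≤ 1) (C : ℝ) :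
    varC p (LR G) ≤ C * Sinf G p := by
  have hv := var_bound0 G h0 h1
  have hsub : Subsingleton V := Fintype.card_le_one_iff_subsingleton.1 hn
  have hE : IsEmpty G.edgeSet := by
    constructor
    intro e
    obtain ⟨u, v, huv⟩ := sym2_rep G e
    have := e.2
    rw [huv] at this
    exact G.ne_of_adj this (Subsingleton.elim u v)
  have : Sinf G p = 0 := by unfold Sinf; simp
  rw [this] at hv ⊢
  linarith

lemma core (b : ℝ) (hb : 0 < b) (d : ℕ) : ∃ C : ℝ, ∀ (V : Type) [Fintype V] (G : SimpleGraph V),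
    DegreeLE G d → CheegerGT G b → ∀ p : ℝ, 0 < p → p < 1 →
      varC p (LR G) ≤ C * ((Fintype.card V : ℝ) / Real.log (Fintype.card V)) * Sinf G p := by
  by_cases hbd : b ≤ d
  swap
  · refine ⟨0, fun V _ G hd hC p h0 h1 => small_case G h0.le h1.le ?_ _⟩
    by_contra hn
    exact hbd (b_lt_d G hC hd (by omega)).le
  have hd0 : 0 < d := by
    have : (0:ℝ) < d := by linarith
    exact_mod_cast this
  obtain ⟨C, hC0, N0, hN0, hA⟩ := asym hb hd0 hbd
  refine ⟨C + Real.log N0, fun V _ G hd hC p h0 h1 => ?_⟩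
  have hN0r : (2:ℝ) ≤ N0 := by exact_mod_cast hN0
  have hlN : 0 < Real.log N0 := Real.log_pos (by linarith)
  have hS := Sinf_nonneg G h0.le h1.le
  rcases Nat.lt_or_ge (Fintype.card V) 2 with hn | hn
  · exact small_case G h0.le h1.le (by omega) _
  have hnr : (2:ℝ) ≤ Fintype.card V := by exact_mod_cast hn
  have hln : 0 < Real.log (Fintype.card V) := Real.log_pos (by linarith)
  have hfrac : 0 ≤ (Fintype.card V : ℝ) / Real.log (Fintype.card V) := by positivity
  rcases Nat.lt_or_ge (Fintype.card V) N0 with hlt | hge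
  · refine (var_bound0 G h0.le h1.le).trans ?_
    apply mul_le_mul_of_nonneg_right _ hS
    have hle : Real.log (Fintype.card V) ≤ Real.log N0 := by
      apply Real.log_le_log (by linarith)
      exact_mod_cast hlt.le
    calc (Fintype.card V : ℝ) =
          Real.log (Fintype.card V) * ((Fintype.card V : ℝ) / Real.log (Fintype.card V)) := by
          field_simp
      _ ≤ _ := by gcongr; linarith
  · obtain ⟨r, a1, a2, a3, a4⟩ := hA _ hge
    refine (main_large G hb hC hd hd0 hbd r hn _ _ rfl rfl a1 a2 a3 h0 h1).trans ?_
    apply mul_le_mul_of_nonneg_right _ hS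
    refine a4.trans ?_
    gcongr
    linarith

lemma deriv_eq_Sinf (p : ℝ) :
    deriv (fun q => expC q (fun x => (largestComp G x : ℝ))) p = Sinf G p := russo p (LR G)

end Final

/-- there is `C(b,d) < ∞` such that in any `(b,d)`-expander, for every `n` and
every `p ∈ (0,1)`,
`Var_p(L_n⁽¹⁾) ≤ C (|V_n| / log |V_n|) · (d/dp) E_p(L_n⁽¹⁾)`. -/
theorem stmt10 (b : ℝ) (hb : 0 < b) (d : ℕ) :
    ∃ C : ℝ, ∀ (E : ExpanderSeq b d) (n : ℕ), ∀ p ∈ Set.Ioo (0 : ℝ) 1,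
      varC p (fun x => (largestComp (E.G n) x : ℝ)) ≤
        C * ((Nat.card (E.V n) : ℝ) / Real.log (Nat.card (E.V n))) *
          deriv (fun q => expC q (fun x => (largestComp (E.G n) x : ℝ))) p := by
  obtain ⟨C, hC⟩ := core b hb d
  refine ⟨C, fun E n p hp => ?_⟩
  have := E.finV n
  have : Fintype (E.V n) := Fintype.ofFinite _
  have h := hC (E.V n) (E.G n) (E.degree_le n) (E.cheeger_gt n) p hp.1 hp.2
  rw [← deriv_eq_Sinf] at h
  rw [Nat.card_eq_fintype_card]
  exact h
end
end

section
/- (Generalized Russo lemma.) Let E be a finite set, let f:{0,1}^E→ℝ be monotone increasing with respect to the coordinatewise partial order, and let p∈(0,1). Then the map q ↦ E_q(f) (expectation under the product Bernoulli(q) measure) is differentiable at p and (d/dp) E_p(f) = (1/(2p(1−p))) · Σ_{e∈E} ‖Δ_{e,p} f‖_{1,p}. -/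
open Filter

noncomputable section

/-- Flipping the coordinate `e`. -/
def russoFlip {E : Type*} (e : E) (x : E → Bool) : E → Bool := setEdge x e (!x e)

theorem russoFlip_invol {E : Type*} (e : E) : Function.Involutive (russoFlip e) := by
  intro x
  funext e'
  by_cases h : e' = e
  · subst h; simp [russoFlip, setEdge]
  · simp [russoFlip, setEdge, h]

theorem russo_sum_pair {E : Type*} [Fintype (E → Bool)] (e : E) (g h : (E → Bool) → ℝ)
    (H : ∀ x, x e = true → g x + g (russoFlip e x) = h x + h (russoFlip e x)) :
    ∑ x, g x = ∑ x, h x := by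
  have H' : ∀ x, g x + g (russoFlip e x) = h x + h (russoFlip e x) := by
    intro x
    cases hx : x e with
    | true => exact H x hx
    | false =>
      have := H (russoFlip e x) (by simp [russoFlip, setEdge, hx])
      rw [russoFlip_invol e x] at this
      linarith
  have key : ∀ k : (E → Bool) → ℝ, ∑ x, k (russoFlip e x) = ∑ x, k x := fun k =>
    Equiv.sum_comp (russoFlip_invol e).toPerm k
  have := Finset.sum_congr (rfl : (Finset.univ : Finset (E → Bool)) = _) (fun x _ => H' x)
  rw [Finset.sum_add_distrib, Finset.sum_add_distrib, key, key] at this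
  linarith

/-- generalized Russo lemma: for a monotone increasing `f : {0,1}^E → ℝ` and
`p ∈ (0,1)`, the map `q ↦ E_q(f)` is differentiable at `p` with derivative
`(1/(2p(1-p))) Σ_{e ∈ E} ‖Δ_{e,p} f‖_{1,p}`. -/
theorem stmt11 (E : Type) [Finite E] (f : (E → Bool) → ℝ) (hf : Monotone f)
    (p : ℝ) (hp : p ∈ Set.Ioo (0 : ℝ) 1) :
    HasDerivAt (fun q => expC q f)
      ((1 / (2 * p * (1 - p))) * ∑ᶠ e : E, norm1 p (deltaE p f e)) p := by
  classical
  obtain ⟨hp0, hp1⟩ := hp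
  have := Fintype.ofFinite E
  have hexp : ∀ q (g : (E → Bool) → ℝ), expC q g =
      ∑ x : E → Bool, (∏ e : E, if x e then q else 1 - q) * g x := by
    intro q g
    simp only [expC, configProb, finsum_eq_sum_of_fintype, finprod_eq_prod_of_fintype]
  have hw : ∀ b : Bool, HasDerivAt (fun q : ℝ => if b then q else 1 - q)
      (if b then 1 else -1) p := by
    intro b
    cases b
    · simpa using (hasDerivAt_id p).const_sub 1
    · simpa using hasDerivAt_id' p
  have hD : HasDerivAt (fun q => expC q f)
      (∑ x : E → Bool, (∑ e : E, (∏ j ∈ Finset.univ.erase e, if x j then p else 1 - p) •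
        (if x e then (1 : ℝ) else -1)) * f x) p := by
    simp only [hexp]
    refine HasDerivAt.fun_sum fun x _ => ?_
    exact (HasDerivAt.fun_finsetProd fun e _ => hw (x e)).mul_const (f x)
  convert hD using 1
  rw [finsum_eq_sum_of_fintype, Finset.mul_sum]
  simp only [Finset.sum_mul]
  rw [Finset.sum_comm]
  refine Finset.sum_congr rfl fun e _ => ?_
  rw [norm1, hexp, Finset.mul_sum]
  refine russo_sum_pair e _ _ fun x hx => ?_
  have h1 : setEdge x e true = x := by
    funext e'
    by_cases h : e' = e
    · subst h; simp [setEdge, hx]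
    · simp [setEdge, h]
  set y := setEdge x e false with hy
  have hfl : russoFlip e x = y := by simp [russoFlip, hx, hy]
  have hye : y e = false := by simp [hy, setEdge]
  have h2 : setEdge y e true = x := by
    rw [← h1]
    funext e'
    by_cases h : e' = e <;> simp [setEdge, hy, h]
  have h3 : setEdge y e false = y := by
    funext e'
    by_cases h : e' = e <;> simp [setEdge, hy, h]
  have hle : f y ≤ f x := by
    apply hf
    intro e'
    by_cases h : e' = e <;> simp [setEdge, hy, h]
  have hP : (∏ j ∈ Finset.univ.erase e, if y j then p else 1 - p) =
      ∏ j ∈ Finset.univ.erase e, if x j then p else 1 - p := by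
    refine Finset.prod_congr rfl fun j hj => ?_
    have : j ≠ e := Finset.ne_of_mem_erase hj
    simp [hy, setEdge, this]
  have hdx : |deltaE p f e x| = (1 - p) * (f x - f y) := by
    rw [deltaE, h1, ← hy, ← abs_of_nonneg (mul_nonneg (sub_nonneg.2 hp1.le) (sub_nonneg.2 hle))]
    congr 1; ring
  have hdy : |deltaE p f e y| = p * (f x - f y) := by
    rw [deltaE, h2, h3, abs_sub_comm, ← abs_of_nonneg (mul_nonneg hp0.le (sub_nonneg.2 hle))]
    congr 1; ring
  rw [hfl, hdx, hdy, ← Finset.mul_prod_erase _ _ (Finset.mem_univ e),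
    ← Finset.mul_prod_erase _ (fun j => if y j then p else 1 - p) (Finset.mem_univ e), hP]
  have hp2 : 1 - p ≠ 0 := by linarith
  have hp3 : p ≠ 0 := hp0.ne'
  simp only [hx, hye, smul_eq_mul]
  simp only [if_true, Bool.false_eq_true, if_false]
  field_simp
  ring
end
end

section
/- Let G=(V,E) be a finite graph and let p∈(0,1). Then (d/dp) E_p(L^{(1)}) ≥ (1/(2(1−p))) · E_p( |∂_E 𝒞^{(1)}| ), where (d/dp) E_p(L^{(1)}) is the derivative at p of the map q ↦ E_q(L^{(1)}), 𝒞^{(1)} is the vertex set of the largest connected component of the random configuration, and ∂_E 𝒞^{(1)} is the set of edges of G with exactly one endpoint in 𝒞^{(1)}. -/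
open Filter

noncomputable section

theorem percoGraph_adj15 {V : Type*} (G : SimpleGraph V) (x : G.edgeSet → Bool) (u v : V)
    (h : G.Adj u v) (hx : x ⟨s(u, v), h⟩ = true) : (percoGraph G x).Adj u v := by
  rw [percoGraph, SimpleGraph.fromEdgeSet_adj]
  exact ⟨⟨h, hx⟩, h.ne⟩

theorem percoGraph_mono15 {V : Type*} (G : SimpleGraph V) (x y : G.edgeSet → Bool)
    (h : ∀ e, x e = true → y e = true) : percoGraph G x ≤ percoGraph G y := by
  apply SimpleGraph.fromEdgeSet_mono
  rintro e ⟨he, hx⟩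
  exact ⟨he, h _ hx⟩

theorem percoComp_mono15 {V : Type*} (G : SimpleGraph V) (x y : G.edgeSet → Bool)
    (h : ∀ e, x e = true → y e = true) (v : V) : percoComp G x v ⊆ percoComp G y v :=
  fun _ hu => SimpleGraph.Reachable.mono (percoGraph_mono15 G x y h) hu

theorem compSize_le15 {V : Type*} [Finite V] (G : SimpleGraph V) (x : G.edgeSet → Bool) (v : V) :
    compSize G x v ≤ largestComp G x :=
  le_csSup (Set.finite_range _).bddAbove ⟨v, rfl⟩

/-- The edge `e` lies in the edge boundary of `S`. -/
def bdry15 {V : Type*} (G : SimpleGraph V) (S : Set V) (e : G.edgeSet) : Prop :=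
  ∃ u v : V, e.1 = s(u, v) ∧ u ∈ S ∧ v ∉ S

theorem card_bdry15 {V : Type*} [Finite V] (G : SimpleGraph V) (S : Set V) :
    edgeBoundaryCard G S ≤ {e | bdry15 G S e}.ncard := by
  unfold edgeBoundaryCard
  have h1 : {q : V × V | G.Adj q.1 q.2 ∧ q.1 ∈ S ∧ q.2 ∉ S}.ncard ≤
      (Subtype.val '' {e | bdry15 G S e}).ncard := by
    refine Set.ncard_le_ncard_of_injOn (fun q => s(q.1, q.2)) ?_ ?_ (Set.toFinite _)
    · rintro ⟨u, v⟩ ⟨h, hu, hv⟩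
      exact ⟨⟨s(u, v), h⟩, ⟨u, v, rfl, hu, hv⟩, rfl⟩
    · rintro ⟨u, v⟩ ⟨h, hu, hv⟩ ⟨u', v'⟩ ⟨h', hu', hv'⟩ heq
      simp only [Sym2.eq_iff] at heq
      rcases heq with ⟨rfl, rfl⟩ | ⟨rfl, rfl⟩
      · rfl
      · exact absurd hu hv'
  rwa [Set.ncard_image_of_injective _ Subtype.val_injective] at h1

theorem largest_mono15 {V : Type*} [Finite V] (G : SimpleGraph V) (x y : G.edgeSet → Bool)
    (S : Set V) (hS : (∃ v : V, S = percoComp G x v) ∧ S.ncard = largestComp G x)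
    (h : ∀ e, x e = true → y e = true) : largestComp G x ≤ largestComp G y := by
  obtain ⟨⟨v, rfl⟩, h2⟩ := hS
  rw [← h2]
  exact (Set.ncard_le_ncard (percoComp_mono15 G x y h v) (Set.toFinite _)).trans
    (compSize_le15 G y v)

theorem bdry_closed15 {V : Type*} (G : SimpleGraph V) (x : G.edgeSet → Bool)
    (w : V) (e : G.edgeSet) (he : bdry15 G (percoComp G x w) e) : x e = false := by
  obtain ⟨e, hadj⟩ := e
  obtain ⟨u, v, rfl, hu, hv⟩ := he
  by_contra hx
  rw [Bool.not_eq_false] at hx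
  exact hv (SimpleGraph.Reachable.trans hu (percoGraph_adj15 G x u v hadj hx).reachable)

theorem largest_strict15 {V : Type*} [Finite V] (G : SimpleGraph V) (x y : G.edgeSet → Bool)
    (S : Set V) (hS : (∃ v : V, S = percoComp G x v) ∧ S.ncard = largestComp G x)
    (h : ∀ e, x e = true → y e = true) (e : G.edgeSet) (he : bdry15 G S e) (hy : y e = true) :
    largestComp G x + 1 ≤ largestComp G y := by
  obtain ⟨⟨w, rfl⟩, h2⟩ := hS
  rw [← h2]
  refine le_trans ?_ (compSize_le15 G y w)
  apply Set.ncard_lt_ncard _ (Set.toFinite _)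
  refine ⟨percoComp_mono15 G x y h w, fun hsub => ?_⟩
  obtain ⟨e, hadj⟩ := e
  obtain ⟨u, v, rfl, hu, hv⟩ := he
  apply hv
  apply hsub
  exact SimpleGraph.Reachable.trans (percoComp_mono15 G x y h w hu)
    (percoGraph_adj15 G y u v hadj hy).reachable

/-- Flip the coordinate `e`. -/
def flip15 {E : Type*} [DecidableEq E] (e : E) (x : E → Bool) : E → Bool :=
  Function.update x e (!x e)

theorem flip_flip15 {E : Type*} [DecidableEq E] (e : E) (x : E → Bool) :
    flip15 e (flip15 e x) = x := by
  simp [flip15]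

/-- The weight of all coordinates but `e`. -/
def wt15 {E : Type*} [Fintype E] [DecidableEq E] (p : ℝ) (e : E) (x : E → Bool) : ℝ :=
  ∏ j ∈ Finset.univ.erase e, if x j then p else 1 - p

theorem wt_flip15 {E : Type*} [Fintype E] [DecidableEq E] (p : ℝ) (e : E) (x : E → Bool) :
    wt15 p e (flip15 e x) = wt15 p e x := by
  apply Finset.prod_congr rfl
  intro j hj
  rw [flip15, Function.update_of_ne (Finset.ne_of_mem_erase hj)]

theorem wt_nonneg15 {E : Type*} [Fintype E] [DecidableEq E] (p : ℝ) (hp : p ∈ Set.Ioo (0 : ℝ) 1)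
    (e : E) (x : E → Bool) : 0 ≤ wt15 p e x := by
  apply Finset.prod_nonneg
  intro j _
  have := hp.1
  have := hp.2
  split_ifs <;> linarith

theorem russo15 {E : Type*} [Fintype E] [DecidableEq E] (p : ℝ) (f : (E → Bool) → ℝ) :
    HasDerivAt (fun q => expC q f)
      (∑ e : E, ∑ x : E → Bool, wt15 p e x * (if x e then 1 else -1) * f x) p := by
  have h1 : (fun q => expC q f) =
      fun q => ∑ x : E → Bool, (∏ e : E, if x e then q else 1 - q) * f x := by
    funext q
    simp only [expC, configProb, finsum_eq_sum_of_fintype, finprod_eq_prod_of_fintype]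
  rw [h1, Finset.sum_comm]
  apply HasDerivAt.fun_sum
  intro x _
  rw [← Finset.sum_mul]
  apply HasDerivAt.mul_const
  have := HasDerivAt.fun_finsetProd (u := Finset.univ) (x := p)
    (f := fun (e : E) (q : ℝ) => if x e then q else 1 - q)
    (f' := fun e => if x e then 1 else -1) (by
      intro e _
      cases x e
      · simpa using (hasDerivAt_id p).const_sub 1
      · simpa using hasDerivAt_id' p)
  simpa [wt15, smul_eq_mul] using this

/-- `(d/dp) E_p(L⁽¹⁾) ≥ (1/(2(1-p))) E_p(|∂_E 𝒞⁽¹⁾|)`, where `𝒞⁽¹⁾` is the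
vertex set of the largest connected component (ties broken by a fixed rule, i.e. by an
arbitrary fixed choice function `giant` selecting a largest component). -/
theorem stmt15 (V : Type) [Finite V] (G : SimpleGraph V) (p : ℝ) (hp : p ∈ Set.Ioo (0 : ℝ) 1)
    (giant : (G.edgeSet → Bool) → Set V)
    (hgiant : ∀ x, (∃ v : V, giant x = percoComp G x v) ∧
      (giant x).ncard = largestComp G x) :
    (1 / (2 * (1 - p))) * expC p (fun x => (edgeBoundaryCard G (giant x) : ℝ)) ≤
      deriv (fun q => expC q (fun x => (largestComp G x : ℝ))) p := by
  classical
  have : Fintype G.edgeSet := Fintype.ofFinite _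
  have h1p : 0 < 1 - p := by linarith [hp.2]
  rw [(russo15 p (fun x => (largestComp G x : ℝ))).deriv]
  have hB : expC p (fun x => (edgeBoundaryCard G (giant x) : ℝ)) ≤
      ∑ e : G.edgeSet, ∑ x : G.edgeSet → Bool,
        (1 - p) * (wt15 p e x * if bdry15 G (giant x) e then 1 else 0) := by
    rw [expC, finsum_eq_sum_of_fintype, Finset.sum_comm]
    apply Finset.sum_le_sum
    intro x _
    have hP : 0 ≤ configProb p x := by
      rw [configProb, finprod_eq_prod_of_fintype]
      apply Finset.prod_nonneg
      intro j _
      have := hp.1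
      split_ifs <;> linarith
    have hc : (edgeBoundaryCard G (giant x) : ℝ) ≤
        ∑ e : G.edgeSet, if bdry15 G (giant x) e then (1 : ℝ) else 0 := by
      rw [Finset.sum_boole]
      have := card_bdry15 G (giant x)
      rw [Set.ncard_eq_toFinset_card'] at this
      simpa using this
    refine (mul_le_mul_of_nonneg_left hc hP).trans (le_of_eq ?_)
    rw [Finset.mul_sum]
    apply Finset.sum_congr rfl
    intro e _
    split_ifs with hb
    · obtain ⟨⟨w, hw⟩, -⟩ := hgiant x
      rw [hw] at hb
      have hx := bdry_closed15 G x w e hb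
      rw [configProb, finprod_eq_prod_of_fintype, wt15,
        ← Finset.mul_prod_erase _ _ (Finset.mem_univ e)]
      simp [hx]
    · simp
  have hkey : ∀ e : G.edgeSet,
      (∑ x : G.edgeSet → Bool, wt15 p e x * if bdry15 G (giant x) e then (1 : ℝ) else 0) ≤
      2 * ∑ x : G.edgeSet → Bool,
        wt15 p e x * (if x e then 1 else -1) * (largestComp G x : ℝ) := by
    intro e
    set F : (G.edgeSet → Bool) → ℝ := fun x =>
      wt15 p e x * (if x e then 1 else -1) * (largestComp G x : ℝ) with hF
    have hflip : ∑ x, F (flip15 e x) = ∑ x, F x :=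
      Equiv.sum_comp (Function.Involutive.toPerm (flip15 e) (flip_flip15 e)) F
    rw [two_mul]
    nth_rewrite 2 [← hflip]
    rw [← Finset.sum_add_distrib]
    apply Finset.sum_le_sum
    intro x _
    have hw := wt_nonneg15 p hp e x
    simp only [hF, wt_flip15]
    have hfe : flip15 e x e = !x e := by simp [flip15]
    rw [hfe]
    have hfj : ∀ j, j ≠ e → flip15 e x j = x j := by
      intro j hj
      simp [flip15, hj]
    cases hx : x e
    · have hle : ∀ j, x j = true → flip15 e x j = true := by
        intro j hj
        by_cases hje : j = e
        · subst hje; simp [hx] at hj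
        · rw [hfj j hje, hj]
      by_cases hb : bdry15 G (giant x) e
      · have := largest_strict15 G x (flip15 e x) (giant x) (hgiant x) hle e hb
          (by simp [hfe, hx])
        have h2 : (largestComp G x : ℝ) + 1 ≤ largestComp G (flip15 e x) := by exact_mod_cast this
        simp [hb]
        nlinarith
      · have := largest_mono15 G x (flip15 e x) (giant x) (hgiant x) hle
        have h2 : (largestComp G x : ℝ) ≤ largestComp G (flip15 e x) := by exact_mod_cast this
        simp [hb]
        nlinarith
    · have hle : ∀ j, flip15 e x j = true → x j = true := by
        intro j hj
        by_cases hje : j = e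
        · rw [hje, hx]
        · rw [← hfj j hje, hj]
      have hnb : ¬ bdry15 G (giant x) e := by
        intro hb
        obtain ⟨⟨w, hw⟩, -⟩ := hgiant x
        rw [hw] at hb
        have := bdry_closed15 G x w e hb
        simp [hx] at this
      have := largest_mono15 G (flip15 e x) x (giant (flip15 e x)) (hgiant _) hle
      have h2 : (largestComp G (flip15 e x) : ℝ) ≤ largestComp G x := by exact_mod_cast this
      simp [hnb]
      nlinarith
  have hfin := Finset.sum_le_sum (fun e (_ : e ∈ Finset.univ) => hkey e)
  rw [← Finset.mul_sum] at hfin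
  simp_rw [← Finset.mul_sum] at hB
  rw [one_div, inv_mul_le_iff₀ (by positivity)]
  nlinarith [mul_le_mul_of_nonneg_left hfin h1p.le]
end
end
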